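/- Let Δ be a Cohen-Macaulay simplicial forest on vertex set V(Δ) and let R = K[x_v : v ∈ V(Δ)] be a polynomial ring over a field K. Then for every k ≥ 1, the quotient R/I(Δ)^{[k]} is Cohen-Macaulay (where for k > ν(Δ) the ideal I(Δ)^{[k]} is the zero ideal, so R/I(Δ)^{[k]} = R). -/

import Mathlib

open MvPolynomial

/-- A simplicial complex on the vertex set `V`, presented by its set of facets
(the maximal faces).  Every facet is nonempty and no facet contains another. -/
structure SimplicialComplexOn (V : Type) [Fintype V] [DecidableEq V] : Type where
  facets : Finset (Finset V)
  nonempty_facet : ∀ F ∈ facets, F.Nonempty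
  antichain : ∀ F ∈ facets, ∀ G ∈ facets, F ⊆ G → F = G

variable {V : Type} [Fintype V] [DecidableEq V]

/-- `F` is a leaf of the collection of facets `S`: either `F` is the only facet, or
there is a facet `G ≠ F` (a joint) with `F ∩ H ⊆ F ∩ G` for every facet `H ≠ F`. -/
def IsLeafOf (S : Finset (Finset V)) (F : Finset V) : Prop :=
  F ∈ S ∧ ((∀ H ∈ S, H = F) ∨
    ∃ G ∈ S, G ≠ F ∧ ∀ H ∈ S, H ≠ F → F ∩ H ⊆ F ∩ G)

/-- The forest property for a facet collection: every nonempty subcollection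
(i.e. every nonempty subcomplex) has a leaf. -/
def HasLeafProp (S : Finset (Finset V)) : Prop :=
  ∀ T ⊆ S, T.Nonempty → ∃ F, IsLeafOf T F

/-- A good leaf: a facet which is a leaf of every subcomplex containing it. -/
def IsGoodLeafOf (S : Finset (Finset V)) (F : Finset V) : Prop :=
  F ∈ S ∧ ∀ T ⊆ S, F ∈ T → IsLeafOf T F

/-- A special leaf: a leaf `F` such that for all facets `H, H' ≠ F`,
`H ∩ H' ≠ ∅` iff `(H ∩ H') \ F ≠ ∅`. -/
def IsSpecialLeafOf (S : Finset (Finset V)) (F : Finset V) : Prop :=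
  IsLeafOf S F ∧ ∀ H ∈ S, ∀ H' ∈ S, H ≠ F → H' ≠ F →
    ((H ∩ H').Nonempty ↔ ((H ∩ H') \ F).Nonempty)

/-- A matching: a subcollection of the facets that is pairwise disjoint. -/
def IsMatchingOf (S : Finset (Finset V)) (M : Finset (Finset V)) : Prop :=
  M ⊆ S ∧ ∀ F ∈ M, ∀ G ∈ M, F ≠ G → F ∩ G = ∅

/-- The matching number: maximum size of a matching. -/
noncomputable def matchingNumberOf (S : Finset (Finset V)) : ℕ :=
  sSup {n | ∃ M : Finset (Finset V), IsMatchingOf S M ∧ M.card = n}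

/-- The facet collection `S` is grafted: it decomposes as `Fs ∪ Gs` where
(1) every vertex of a `G ∈ Gs` lies in some `F ∈ Fs`, (2) `Fs` is exactly the set
of leaves of `S`, (3) `Fs` and `Gs` are disjoint, (4) the members of `Fs` are
pairwise disjoint, and (5) for each `G ∈ Gs`, deleting the facet `G` leaves a
grafted collection. -/
inductive IsGrafted : Finset (Finset V) → Prop where
  | intro (S Fs Gs : Finset (Finset V))
      (hunion : S = Fs ∪ Gs)
      (hdisj : Disjoint Fs Gs)
      (hcover : ∀ G ∈ Gs, ∀ v ∈ G, ∃ F ∈ Fs, v ∈ F)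
      (hleaves : ∀ F, IsLeafOf S F ↔ F ∈ Fs)
      (hFdisj : ∀ F ∈ Fs, ∀ F' ∈ Fs, F ≠ F' → F ∩ F' = ∅)
      (hrec : ∀ G ∈ Gs, IsGrafted (S.erase G)) :
      IsGrafted S

/-- `S` is the (minimal presentation of the) grafting of the collection `Gs`
with the simplices `Fs`. -/
def IsGraftingDecomp (S Fs Gs : Finset (Finset V)) : Prop :=
  S = Fs ∪ Gs ∧ Disjoint Fs Gs ∧
  (∀ G ∈ Gs, ∀ v ∈ G, ∃ F ∈ Fs, v ∈ F) ∧
  (∀ F, IsLeafOf S F ↔ F ∈ Fs) ∧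
  (∀ F ∈ Fs, ∀ F' ∈ Fs, F ≠ F' → F ∩ F' = ∅) ∧
  (∀ G ∈ Gs, IsGrafted (S.erase G))

/-- A Cohen-Macaulay simplicial forest, combinatorially: a grafted simplicial forest. -/
def IsCMForestFacets (S : Finset (Finset V)) : Prop :=
  HasLeafProp S ∧ IsGrafted S

/-- The closed neighborhood `N[F] = {F} ∪ {G ∈ S : G ≠ F, G ∩ F ≠ ∅}`. -/
def closedNbhd (S : Finset (Finset V)) (F : Finset V) : Finset (Finset V) :=
  insert F (S.filter fun G => G ≠ F ∧ (G ∩ F).Nonempty)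

/-- The contraction of the facet collection `S` on `A`: the minimal members of
`{F \ A : F ∈ S}`. -/
def contraction (S : Finset (Finset V)) (A : Finset V) : Finset (Finset V) :=
  (S.image fun F => F \ A).filter fun F' => ∀ G ∈ S, G \ A ⊆ F' → G \ A = F'

variable (K : Type) [Field K]

/-- The square-free monomial `x_S = ∏_{v ∈ S} x_v`. -/
noncomputable def xMon (S : Finset V) : MvPolynomial V K := ∏ v ∈ S, X v

/-- The facet ideal `I(Δ) = ⟨x_F : F a facet⟩`. -/
noncomputable def facetIdealOf (S : Finset (Finset V)) : Ideal (MvPolynomial V K) :=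
  Ideal.span { p | ∃ F ∈ S, p = xMon K F }

/-- The `k`-th square-free power of an ideal: the ideal generated by all
square-free monomials lying in `I ^ k`. -/
noncomputable def sqfreePow (I : Ideal (MvPolynomial V K)) (k : ℕ) :
    Ideal (MvPolynomial V K) :=
  Ideal.span { p | (∃ S : Finset V, p = xMon K S) ∧ p ∈ I ^ k }

/-- The depth of `R/I` with respect to the homogeneous maximal ideal
`m = ⟨x_v : v ∈ V⟩`: the largest length of an `R/I`-regular sequence of
elements of `m`. -/
noncomputable def gradedDepth (I : Ideal (MvPolynomial V K)) : ℕ :=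
  sSup {n | ∃ rs : List (MvPolynomial V K), rs.length = n ∧
    (∀ r ∈ rs, r ∈ Ideal.span (Set.range (X : V → MvPolynomial V K))) ∧
    RingTheory.Sequence.IsRegular (MvPolynomial V K ⧸ I) rs}

/-- `R/I` is Cohen-Macaulay: its depth equals its Krull dimension. -/
def IsCMQuot (I : Ideal (MvPolynomial V K)) : Prop :=
  ((gradedDepth K I : ℕ∞) : WithBot ℕ∞) = ringKrullDim (MvPolynomial V K ⧸ I)

/-!
The ideal `I(Δ)^[k]` is the Stanley–Reisner ideal of the complex of vertex sets containing no
matching of size `k`. This complex is pure vertex decomposable, and pure vertex decomposable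
complexes have Cohen-Macaulay Stanley–Reisner rings.

For the algebra, let a pure vertex decomposable complex have facets with `d` vertices. Then the
elementary symmetric polynomials `e_d, …, e_1` form a regular sequence of maximal length: for a
simplex `W` the polynomial `e_d` reduces to `x_W`, and killing it leaves the boundary of `W`, which
is vertex decomposable of smaller dimension; the general case follows from
`0 → R/(I : x) → R/I → R/(I + (x)) → 0`, since colon and sum with a variable correspond to star and
deletion.

For the combinatorics, call the leaves of `Δ` blocks. They are disjoint, cover all vertices, and the
facets meet each block in a chain of traces. As line graphs of simplicial forests are chordal and
pairwise meeting facets of a forest have a common vertex, some facet has all its neighbors passing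
through one vertex. This yields a block `b` outside which the facets meeting in `b` still meet, as
soon as they are not contained in `b`. Now shed the vertices of `b` in the order of the chain of
traces. Once the vertices passed fill a facet inside `b`, the complex is that of the facets disjoint
from `b`, for `k - 1`; deleting a vertex earlier yields the complex of the traces outside `b` of the
facets that meet `b` only in vertices already passed, for the same `k`. Both have one block fewer.
-/

section RegularSequences

open RingTheory.Sequence
open scoped Pointwise

variable {R : Type*} [CommRing R]

theorem quotSMulTop_map_injective_of_exact {M₁ M₂ M₃ : Type*} [AddCommGroup M₁]
    [AddCommGroup M₂] [AddCommGroup M₃] [Module R M₁] [Module R M₂] [Module R M₃] {r : R}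
    {f : M₁ →ₗ[R] M₂} {g : M₂ →ₗ[R] M₃} (hf : Function.Injective f) (hfg : Function.Exact f g)
    (hr : IsSMulRegular M₃ r) : Function.Injective (QuotSMulTop.map r f) := by
  have hexact := QuotSMulTop.map_first_exact_on_four_term_exact_of_isSMulRegular_last
    ((LinearMap.exact_zero_iff_injective PUnit f).mpr hf) hfg hr
  rwa [map_zero, LinearMap.exact_zero_iff_injective] at hexact

theorem isWeaklyRegular_of_exact (rs : List R) : ∀ {M₁ M₂ M₃ : Type*} [AddCommGroup M₁]
    [AddCommGroup M₂] [AddCommGroup M₃] [Module R M₁] [Module R M₂] [Module R M₃]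
    {f : M₁ →ₗ[R] M₂} {g : M₂ →ₗ[R] M₃}, Function.Injective f → Function.Exact f g →
    Function.Surjective g → IsWeaklyRegular M₁ rs → IsWeaklyRegular M₃ rs →
    IsWeaklyRegular M₂ rs := by
  induction rs with
  | nil => intros; exact .nil R _
  | cons r rs ih =>
    intro M₁ M₂ M₃ _ _ _ _ _ _ f g hf hfg hg h₁ h₃
    rw [isWeaklyRegular_cons_iff] at h₁ h₃
    exact .cons
      (isSMulRegular_of_range_eq_ker hf (LinearMap.exact_iff.mp hfg).symm h₁.1 h₃.1)
      (ih (quotSMulTop_map_injective_of_exact hf hfg h₃.1) (QuotSMulTop.map_exact r hfg hg)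
        (QuotSMulTop.map_surjective r hg) h₁.2 h₃.2)

theorem isWeaklyRegular_of_subsingleton (rs : List R) : ∀ {M : Type*} [AddCommGroup M]
    [Module R M] [Subsingleton M], IsWeaklyRegular M rs := by
  induction rs with
  | nil => intros; exact .nil R _
  | cons r rs ih =>
    intro M _ _ _
    have : Subsingleton (QuotSMulTop r M) :=
      (Submodule.Quotient.mk_surjective (r • (⊤ : Submodule R M))).subsingleton
    exact .cons (Function.injective_of_subsingleton _) ih

theorem krullDim_union_le_of_isUpperSet {α : Type*} [Preorder α] {s t : Set α}
    (hs : IsUpperSet s) (ht : IsUpperSet t) :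
    Order.krullDim ↥(s ∪ t) ≤ max (Order.krullDim s) (Order.krullDim t) := by
  have length_le_of_head {u : Set α} (hu : IsUpperSet u) (l : LTSeries ↥(s ∪ t))
      (hl : l.head.1 ∈ u) : (l.length : WithBot ℕ∞) ≤ Order.krullDim u :=
    Order.LTSeries.length_le_krullDim
      { length := l.length
        toFun := fun i ↦ ⟨l i, hu (LTSeries.head_le l i) hl⟩
        step := l.step }
  exact iSup_le fun l ↦ l.head.2.elim (fun h ↦ le_max_of_le_left (length_le_of_head hs l h))
    fun h ↦ le_max_of_le_right (length_le_of_head ht l h)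

theorem supportDim_le_max_of_exact {M₁ M₂ M₃ : Type*} [AddCommGroup M₁]
    [AddCommGroup M₂] [AddCommGroup M₃] [Module R M₁] [Module R M₂] [Module R M₃]
    {f : M₁ →ₗ[R] M₂} {g : M₂ →ₗ[R] M₃} (hf : Function.Injective f) (hfg : Function.Exact f g)
    (hg : Function.Surjective g) :
    Module.supportDim R M₂ ≤ max (Module.supportDim R M₁) (Module.supportDim R M₃) := by
  rw [Module.supportDim, Module.support_of_exact hfg hf hg]
  exact krullDim_union_le_of_isUpperSet (fun _ _ hle ↦ Module.mem_support_mono hle)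
    fun _ _ hle ↦ Module.mem_support_mono hle

/-- The map `R ⧸ (I : x) → R ⧸ I` induced by multiplication by `x`, the first arrow of the
exact sequence `0 → R ⧸ (I : x) → R ⧸ I → R ⧸ (I + (x)) → 0`. -/
def colonMul (I : Ideal R) (x : R) : R ⧸ I.colon {x} →ₗ[R] R ⧸ I :=
  Submodule.mapQ (I.colon {x}) I (LinearMap.mulLeft R x) fun p hp ↦ by
    simpa [Submodule.mem_colon_singleton, mul_comm] using hp

theorem colonMul_injective (I : Ideal R) (x : R) : Function.Injective (colonMul I x) := by
  rw [injective_iff_map_eq_zero]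
  intro p hp
  obtain ⟨p, rfl⟩ := Submodule.Quotient.mk_surjective _ p
  rw [colonMul, Submodule.mapQ_apply, Submodule.Quotient.mk_eq_zero] at hp
  rw [Submodule.Quotient.mk_eq_zero, Submodule.mem_colon_singleton]
  simpa [mul_comm] using hp

theorem colonMul_exact_factor (I : Ideal R) (x : R) :
    Function.Exact (colonMul I x)
      (Submodule.factor (le_sup_left : I ≤ I ⊔ Ideal.span {x})) := by
  intro p
  obtain ⟨p, rfl⟩ := Submodule.Quotient.mk_surjective _ p
  rw [← Submodule.mkQ_apply, Submodule.factor_mk, Submodule.mkQ_apply, Submodule.mkQ_apply,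
    Submodule.Quotient.mk_eq_zero, sup_comm, Ideal.mem_span_singleton_sup]
  constructor
  · rintro ⟨c, b, hb, rfl⟩
    refine ⟨Submodule.Quotient.mk c, ?_⟩
    rw [colonMul, Submodule.mapQ_apply, eq_comm, Submodule.Quotient.eq]
    simpa [mul_comm] using hb
  · rintro ⟨c, hc⟩
    obtain ⟨c, rfl⟩ := Submodule.Quotient.mk_surjective _ c
    rw [colonMul, Submodule.mapQ_apply, eq_comm, Submodule.Quotient.eq] at hc
    exact ⟨c, p - x * c, hc, by ring⟩

theorem isWeaklyRegular_quotient_of_colon_of_sup {I : Ideal R} {x : R} {rs : List R}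
    (hcolon : IsWeaklyRegular (R ⧸ I.colon {x}) rs)
    (hsup : IsWeaklyRegular (R ⧸ (I ⊔ Ideal.span {x})) rs) : IsWeaklyRegular (R ⧸ I) rs :=
  isWeaklyRegular_of_exact rs (colonMul_injective I x) (colonMul_exact_factor I x)
    (Submodule.factor_surjective le_sup_left) hcolon hsup

theorem ringKrullDim_quotient_le_max_colon_sup (I : Ideal R) (x : R) :
    ringKrullDim (R ⧸ I) ≤
      max (ringKrullDim (R ⧸ I.colon {x})) (ringKrullDim (R ⧸ (I ⊔ Ideal.span {x}))) := by
  simpa only [Module.supportDim_quotient_eq_ringKrullDim] using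
    supportDim_le_max_of_exact (colonMul_injective I x) (colonMul_exact_factor I x)
      (Submodule.factor_surjective le_sup_left)

theorem smul_top_quotient_eq_map_span (I : Ideal R) (r : R) :
    (r • ⊤ : Submodule R (R ⧸ I)) = Submodule.map I.mkQ (Ideal.span {r}) := by
  rw [← Submodule.ideal_span_singleton_smul, ← Submodule.range_mkQ I, LinearMap.range_eq_map,
    ← Submodule.map_smul'', smul_eq_mul, Ideal.mul_top]

theorem isWeaklyRegular_quotient_cons {I : Ideal R} {r : R} {rs : List R}
    (hr : IsSMulRegular (R ⧸ I) r) (hrs : IsWeaklyRegular (R ⧸ (I ⊔ Ideal.span {r})) rs) :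
    IsWeaklyRegular (R ⧸ I) (r :: rs) :=
  .cons hr <| (((Submodule.quotEquivOfEq _ _ (smul_top_quotient_eq_map_span I r)).trans
    (Submodule.quotientQuotientEquivQuotientSup I (Ideal.span {r}))).isWeaklyRegular_congr
      rs).mpr hrs

theorem isRegular_quotient_of_isWeaklyRegular {I m : Ideal R} {rs : List R} (hm : m ≠ ⊤)
    (hI : I ≤ m) (hrs : ∀ r ∈ rs, r ∈ m) (h : IsWeaklyRegular (R ⧸ I) rs) :
    IsRegular (R ⧸ I) rs := by
  refine ⟨h, fun htop ↦ hm ?_⟩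
  have hle : Ideal.ofList rs • (⊤ : Submodule R (R ⧸ I)) ≤ Submodule.map I.mkQ m := by
    rw [← Submodule.range_mkQ I, LinearMap.range_eq_map, ← Submodule.map_smul'', smul_eq_mul,
      Ideal.mul_top]
    exact Submodule.map_mono (Ideal.span_le.mpr hrs)
  rw [← htop, top_le_iff, Submodule.map_mkQ_eq_top] at hle
  rwa [sup_eq_right.mpr hI] at hle

theorem length_le_supportDim_of_isRegular (rs : List R) : ∀ {M : Type*} [AddCommGroup M]
    [Module R M] [Module.Finite R M], IsRegular M rs →
    ((rs.length : ℕ∞) : WithBot ℕ∞) ≤ Module.supportDim R M := by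
  induction rs with
  | nil =>
    intro M _ _ _ h
    have := h.nontrivial
    have : Nonempty (Module.support R M) := Module.nonempty_support_of_nontrivial.to_subtype
    exact Order.krullDim_nonneg (α := Module.support R M)
  | cons r rs ih =>
    intro M _ _ _ h
    rw [isRegular_cons_iff] at h
    calc (((r :: rs).length : ℕ∞) : WithBot ℕ∞) = ((rs.length : ℕ∞) : WithBot ℕ∞) + 1 := by simp
      _ ≤ Module.supportDim R (QuotSMulTop r M) + 1 := by gcongr; exact ih h.2
      _ ≤ Module.supportDim R M :=
        Module.supportDim_quotSMulTop_succ_le_of_notMem_minimalPrimes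
          fun _ ↦ h.1.notMem_of_mem_minimalPrimes

end RegularSequences

section SimplicialComplexes

variable {α : Type*}

/-- The closed star of a set `C` in a simplicial complex: the faces `A` with `A ∪ C` a face.
Complexes are given by their lower set of faces; the empty lower set is the void complex. -/
def closedStar [DecidableEq α] (Δ : LowerSet (Finset α)) (C : Finset α) : LowerSet (Finset α) :=
  ⟨{A | A ∪ C ∈ Δ}, fun _ _ hle hA ↦ Δ.lower (Finset.union_subset_union_left hle) hA⟩

/-- The deletion of a set `C` from a simplicial complex: the faces that do not contain `C`. -/
def deletion (Δ : LowerSet (Finset α)) (C : Finset α) : LowerSet (Finset α) :=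
  ⟨{A | A ∈ Δ ∧ ¬ C ⊆ A}, fun _ _ hle hA ↦ ⟨Δ.lower hle hA.1, fun h ↦ hA.2 (h.trans hle)⟩⟩

theorem mem_closedStar [DecidableEq α] {Δ : LowerSet (Finset α)} {A C : Finset α} :
    A ∈ closedStar Δ C ↔ A ∪ C ∈ Δ := Iff.rfl

theorem mem_deletion {Δ : LowerSet (Finset α)} {A C : Finset α} :
    A ∈ deletion Δ C ↔ A ∈ Δ ∧ ¬ C ⊆ A := Iff.rfl

variable [DecidableEq α]

/-- Pure vertex decomposability of a simplicial complex whose facets have `d` vertices. The link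
of `v` is replaced by its closed star, the cone over it with apex `v`, which stays on the same
vertex set without changing `d`; the void complex is allowed, so that `v` may be a cone point or
not a vertex at all. -/
inductive IsVertexDecomposable (d : ℕ) : LowerSet (Finset α) → Prop
  | void : IsVertexDecomposable d ⊥
  | simplex (W : Finset α) (hW : W.card = d) : IsVertexDecomposable d (LowerSet.Iic W)
  | step (Δ : LowerSet (Finset α)) (v : α) (hstar : IsVertexDecomposable d (closedStar Δ {v}))
      (hdel : IsVertexDecomposable d (deletion Δ {v})) : IsVertexDecomposable d Δ

theorem closedStar_Iic_self (W : Finset α) : closedStar (LowerSet.Iic W) W = LowerSet.Iic W := by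
  ext A
  simp [mem_closedStar, Finset.union_subset_iff]

theorem closedStar_deletion_Iic_insert {W C : Finset α} {v : α} (hvW : v ∈ W) (hvC : v ∉ C) :
    closedStar (deletion (LowerSet.Iic W) (insert v C)) {v} = deletion (LowerSet.Iic W) C := by
  ext A
  rw [SetLike.mem_coe, SetLike.mem_coe, mem_closedStar, mem_deletion, mem_deletion,
    Finset.union_singleton, Finset.insert_subset_insert_iff hvC]
  simp [Finset.insert_subset_iff, hvW]

theorem deletion_deletion_Iic_insert (W C : Finset α) (v : α) :
    deletion (deletion (LowerSet.Iic W) (insert v C)) {v} = LowerSet.Iic (W.erase v) := by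
  ext A
  simp only [SetLike.mem_coe, mem_deletion, LowerSet.mem_Iic_iff,
    Finset.insert_subset_iff, Finset.singleton_subset_iff, Finset.subset_erase]
  tauto

theorem isVertexDecomposable_deletion_Iic {d : ℕ} {W C : Finset α} (hW : W.card = d + 1)
    (hC : C ⊆ W) : IsVertexDecomposable d (deletion (LowerSet.Iic W) C) := by
  induction C using Finset.induction_on with
  | empty =>
    have hvoid : deletion (LowerSet.Iic W) ∅ = ⊥ := by
      ext A
      simp [mem_deletion]
    exact hvoid ▸ .void
  | insert v C hvC ih =>
    obtain ⟨hvW, hCW⟩ := Finset.insert_subset_iff.mp hC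
    refine .step _ v ?_ ?_
    · rw [closedStar_deletion_Iic_insert hvW hvC]
      exact ih hCW
    · rw [deletion_deletion_Iic_insert]
      exact .simplex _ (by rw [Finset.card_erase_of_mem hvW, hW, Nat.add_sub_cancel])

end SimplicialComplexes

section StanleyReisner

variable {σ : Type}

/-- The exponent vector of the square-free monomial with support `A`. -/
noncomputable def sqfreeExponent (A : Finset σ) : σ →₀ ℕ :=
  ∑ v ∈ A, Finsupp.single v 1

theorem sqfreeExponent_apply [DecidableEq σ] (A : Finset σ) (v : σ) :
    sqfreeExponent A v = if v ∈ A then 1 else 0 := by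
  simp [sqfreeExponent, Finsupp.finsetSum_apply, Finsupp.single_apply]

theorem support_sqfreeExponent (A : Finset σ) : (sqfreeExponent A).support = A := by
  classical
  ext v
  simp [sqfreeExponent_apply]

theorem sqfreeExponent_le_iff {A : Finset σ} {m : σ →₀ ℕ} :
    sqfreeExponent A ≤ m ↔ A ⊆ m.support := by
  classical
  simp only [Finsupp.le_def, sqfreeExponent_apply, Finset.subset_iff, Finsupp.mem_support_iff]
  refine forall_congr' fun v ↦ ?_
  split_ifs with hv <;> simp [hv, Nat.one_le_iff_ne_zero]

theorem xMon_eq_monomial (A : Finset σ) : xMon K A = monomial (sqfreeExponent A) 1 := by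
  simp [xMon, sqfreeExponent, monomial_sum_one, X]

theorem xMon_dvd_xMon {A B : Finset σ} (h : A ⊆ B) : xMon K A ∣ xMon K B :=
  Finset.prod_dvd_prod_of_subset _ _ _ h

theorem xMon_mem_span_X {A : Finset σ} (hA : A.Nonempty) :
    xMon K A ∈ Ideal.span (Set.range (X : σ → MvPolynomial σ K)) := by
  obtain ⟨v, hv⟩ := hA
  exact Ideal.mem_of_dvd _ (Finset.dvd_prod_of_mem _ hv) (Ideal.subset_span ⟨v, rfl⟩)

/-- The Stanley–Reisner ideal of a simplicial complex, generated by the square-free monomials of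
its non-faces. -/
noncomputable def stanleyReisnerIdeal (Δ : LowerSet (Finset σ)) : Ideal (MvPolynomial σ K) :=
  Ideal.span (xMon K '' (Δ : Set (Finset σ))ᶜ)

variable {Δ : LowerSet (Finset σ)}

theorem xMon_mem_stanleyReisnerIdeal {A : Finset σ} (hA : A ∉ Δ) :
    xMon K A ∈ stanleyReisnerIdeal K Δ :=
  Ideal.subset_span ⟨A, hA, rfl⟩

theorem mem_stanleyReisnerIdeal {p : MvPolynomial σ K} :
    p ∈ stanleyReisnerIdeal K Δ ↔ ∀ m ∈ p.support, m.support ∉ Δ := by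
  have himage : xMon K '' (Δ : Set (Finset σ))ᶜ =
      (fun m ↦ monomial m (1 : K)) '' (sqfreeExponent '' (Δ : Set (Finset σ))ᶜ) := by
    rw [Set.image_image]
    exact Set.image_congr fun A _ ↦ xMon_eq_monomial K A
  rw [stanleyReisnerIdeal, himage, mem_ideal_span_monomial_image]
  refine forall₂_congr fun m _ ↦ ⟨?_, fun hm ↦ ⟨_, ⟨_, hm, rfl⟩, sqfreeExponent_le_iff.mpr le_rfl⟩⟩
  rintro ⟨_, ⟨A, hA, rfl⟩, hle⟩ hm
  exact hA (Δ.lower (sqfreeExponent_le_iff.mp hle) hm)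

theorem xMon_mul_mem_stanleyReisnerIdeal [DecidableEq σ] {C : Finset σ} {p : MvPolynomial σ K} :
    xMon K C * p ∈ stanleyReisnerIdeal K Δ ↔ ∀ m ∈ p.support, m.support ∪ C ∉ Δ := by
  rw [mem_stanleyReisnerIdeal, xMon_eq_monomial]
  constructor
  · intro h m hm hface
    refine h (sqfreeExponent C + m) ?_ (Δ.lower ?_ hface)
    · rwa [mem_support_iff, coeff_monomial_mul, one_mul, ← mem_support_iff]
    · rw [Finset.union_comm]
      exact Finsupp.support_add.trans_eq (by rw [support_sqfreeExponent])
  · intro h m hm hface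
    obtain ⟨hle, hcoeff⟩ : sqfreeExponent C ≤ m ∧ coeff (m - sqfreeExponent C) p ≠ 0 := by
      simpa [coeff_monomial_mul'] using hm
    refine h _ (mem_support_iff.mpr hcoeff) (Δ.lower (Finset.union_subset ?_ ?_) hface)
    · exact Finsupp.support_mono tsub_le_self
    · exact sqfreeExponent_le_iff.mp hle

theorem stanleyReisnerIdeal_colon_xMon [DecidableEq σ] (Δ : LowerSet (Finset σ)) (C : Finset σ) :
    (stanleyReisnerIdeal K Δ).colon {xMon K C} = stanleyReisnerIdeal K (closedStar Δ C) := by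
  ext p
  rw [Submodule.mem_colon_singleton, smul_eq_mul, mul_comm, xMon_mul_mem_stanleyReisnerIdeal,
    mem_stanleyReisnerIdeal]
  rfl

theorem stanleyReisnerIdeal_sup_span_xMon (Δ : LowerSet (Finset σ)) (C : Finset σ) :
    stanleyReisnerIdeal K Δ ⊔ Ideal.span {xMon K C} = stanleyReisnerIdeal K (deletion Δ C) := by
  apply le_antisymm
  · rw [sup_le_iff, Ideal.span_singleton_le_iff_mem]
    exact ⟨Ideal.span_mono (Set.image_mono fun A hA h ↦ hA h.1),
      xMon_mem_stanleyReisnerIdeal K fun h ↦ h.2 subset_rfl⟩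
  · rw [stanleyReisnerIdeal, Ideal.span_le]
    rintro _ ⟨A, hA, rfl⟩
    by_cases hCA : C ⊆ A
    · exact Ideal.mem_sup_right (Ideal.mem_span_singleton.mpr (xMon_dvd_xMon K hCA))
    · exact Ideal.mem_sup_left (xMon_mem_stanleyReisnerIdeal K fun h ↦ hA ⟨h, hCA⟩)

theorem stanleyReisnerIdeal_bot : stanleyReisnerIdeal K (⊥ : LowerSet (Finset σ)) = ⊤ := by
  rw [Ideal.eq_top_iff_one]
  simpa [xMon] using xMon_mem_stanleyReisnerIdeal K (LowerSet.notMem_bot (a := (∅ : Finset σ)))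

theorem stanleyReisnerIdeal_le_span_X (hΔ : ∅ ∈ Δ) :
    stanleyReisnerIdeal K Δ ≤ Ideal.span (Set.range (X : σ → MvPolynomial σ K)) := by
  rw [stanleyReisnerIdeal, Ideal.span_le]
  rintro _ ⟨A, hA, rfl⟩
  exact xMon_mem_span_X K (Finset.nonempty_iff_ne_empty.mpr fun h ↦ hA (h ▸ hΔ))

theorem ringKrullDim_quotient_stanleyReisnerIdeal_Iic_le (W : Finset σ) :
    ringKrullDim (MvPolynomial σ K ⧸ stanleyReisnerIdeal K (LowerSet.Iic W)) ≤ W.card := by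
  set I := stanleyReisnerIdeal K (LowerSet.Iic W)
  let f : MvPolynomial W K →ₐ[K] MvPolynomial σ K ⧸ I :=
    (Ideal.Quotient.mkₐ K I).comp (rename Subtype.val)
  have mk_X_mem_range (v : σ) : Ideal.Quotient.mkₐ K I (X v) ∈ f.range := by
    by_cases hv : v ∈ W
    · exact ⟨X ⟨v, hv⟩, by simp [f]⟩
    · have hzero : Ideal.Quotient.mkₐ K I (X v) = 0 :=
        Ideal.Quotient.eq_zero_iff_mem.mpr <| by
          simpa [xMon] using xMon_mem_stanleyReisnerIdeal K
            (Δ := LowerSet.Iic W) (A := {v}) (by simpa using hv)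
      exact hzero ▸ f.range.zero_mem
  have hf : Function.Surjective f := by
    intro y
    obtain ⟨p, rfl⟩ := Ideal.Quotient.mkₐ_surjective K I y
    change Ideal.Quotient.mkₐ K I p ∈ f.range
    induction p using MvPolynomial.induction_on with
    | C a => exact f.range.algebraMap_mem a
    | add p q hp hq => exact map_add (Ideal.Quotient.mkₐ K I) p q ▸ f.range.add_mem hp hq
    | mul_X p v hp =>
      exact map_mul (Ideal.Quotient.mkₐ K I) p _ ▸ f.range.mul_mem hp (mk_X_mem_range v)
  calc ringKrullDim (MvPolynomial σ K ⧸ I) ≤ ringKrullDim (MvPolynomial W K) :=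
        ringKrullDim_le_of_surjective f.toRingHom hf
    _ = W.card := by
        rw [MvPolynomial.ringKrullDim_of_isNoetherianRing, ringKrullDim_eq_zero_of_field]
        simp

end StanleyReisner

section VertexDecomposable

open RingTheory.Sequence

/-- The sequence `e_d, …, e_1` of elementary symmetric polynomials, a universal system of
parameters for the Stanley–Reisner rings whose facets have `d` vertices. -/
noncomputable def esymmSeq (σ R : Type*) [Fintype σ] [CommSemiring R] :
    ℕ → List (MvPolynomial σ R)
  | 0 => []
  | d + 1 => esymm σ R (d + 1) :: esymmSeq σ R d

theorem length_esymmSeq (σ R : Type*) [Fintype σ] [CommSemiring R] (d : ℕ) :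
    (esymmSeq σ R d).length = d := by
  induction d with
  | zero => rfl
  | succ d ih => rw [esymmSeq, List.length_cons, ih]

theorem isSMulRegular_quotient_iff_of_sub_mem {R : Type*} [CommRing R] {I : Ideal R} {a b : R}
    (h : a - b ∈ I) : IsSMulRegular (R ⧸ I) a ↔ IsSMulRegular (R ⧸ I) b := by
  simp only [isSMulRegular_quotient_iff_mem_of_smul_mem, smul_eq_mul]
  refine forall_congr' fun p ↦ imp_congr_left ?_
  rw [← I.sub_mem_iff_left (I.mul_mem_right p h), sub_mul, sub_sub_cancel]

theorem sup_span_singleton_eq_of_sub_mem {R : Type*} [CommRing R] {I : Ideal R} {a b : R}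
    (h : a - b ∈ I) : I ⊔ Ideal.span {a} = I ⊔ Ideal.span {b} := by
  have le_of_sub_mem {a b : R} (h : a - b ∈ I) :
      I ⊔ Ideal.span {a} ≤ I ⊔ Ideal.span {b} := by
    rw [sup_le_iff, Ideal.span_singleton_le_iff_mem]
    exact ⟨le_sup_left, sub_add_cancel a b ▸
      Submodule.add_mem_sup h (Ideal.mem_span_singleton_self b)⟩
  exact (le_of_sub_mem h).antisymm (le_of_sub_mem (sub_mem_comm_iff.mp h))

theorem span_X_ne_top {σ R : Type*} [CommSemiring R] [Nontrivial R] :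
    Ideal.span (Set.range (X : σ → MvPolynomial σ R)) ≠ ⊤ := by
  have hle : Ideal.span (Set.range (X : σ → MvPolynomial σ R)) ≤
      RingHom.ker (constantCoeff : MvPolynomial σ R →+* R) := by
    rw [Ideal.span_le]
    rintro _ ⟨v, rfl⟩
    exact constantCoeff_X R v
  exact fun h ↦ RingHom.ker_ne_top _ (top_le_iff.mp (h ▸ hle))

theorem isCMQuot_of_isWeaklyRegular {σ : Type} {I : Ideal (MvPolynomial σ K)}
    {rs : List (MvPolynomial σ K)}
    (hI : I ≤ Ideal.span (Set.range X)) (hrs : ∀ r ∈ rs, r ∈ Ideal.span (Set.range X))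
    (hreg : IsWeaklyRegular (MvPolynomial σ K ⧸ I) rs)
    (hdim : ringKrullDim (MvPolynomial σ K ⧸ I) ≤ rs.length) : IsCMQuot K I := by
  have hreg := isRegular_quotient_of_isWeaklyRegular span_X_ne_top hI hrs hreg
  have length_le_dim {rs' : List (MvPolynomial σ K)}
      (h : IsRegular (MvPolynomial σ K ⧸ I) rs') :
      ((rs'.length : ℕ∞) : WithBot ℕ∞) ≤ ringKrullDim (MvPolynomial σ K ⧸ I) := by
    rw [← Module.supportDim_quotient_eq_ringKrullDim]
    exact length_le_supportDim_of_isRegular rs' h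
  have hdepth : gradedDepth K I = rs.length := by
    refine IsGreatest.csSup_eq ⟨⟨rs, rfl, hrs, hreg⟩, ?_⟩
    rintro _ ⟨rs', rfl, -, hreg'⟩
    exact_mod_cast (length_le_dim hreg').trans hdim
  rw [IsCMQuot, hdepth]
  exact (length_le_dim hreg).antisymm hdim

variable {σ : Type} {d : ℕ}

theorem mem_span_X_of_mem_esymmSeq [Fintype σ] : ∀ r ∈ esymmSeq σ K d,
    r ∈ Ideal.span (Set.range (X : σ → MvPolynomial σ K)) := by
  induction d with
  | zero => simp only [esymmSeq, List.not_mem_nil, false_imp_iff, implies_true]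
  | succ d ih =>
    rw [esymmSeq, List.forall_mem_cons]
    refine ⟨Ideal.sum_mem _ fun A hA ↦ xMon_mem_span_X K ?_, ih⟩
    rw [← Finset.card_pos, (Finset.mem_powersetCard.mp hA).2]
    exact d.succ_pos

theorem esymm_sub_xMon_mem [Fintype σ] (W : Finset σ) :
    esymm σ K W.card - xMon K W ∈ stanleyReisnerIdeal K (LowerSet.Iic W) := by
  classical
  have hW : W ∈ Finset.powersetCard W.card Finset.univ := by simp
  rw [esymm, ← Finset.add_sum_erase _ _ hW, ← xMon, add_sub_cancel_left]
  refine Ideal.sum_mem _ fun A hA ↦ xMon_mem_stanleyReisnerIdeal K fun hAW ↦ ?_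
  obtain ⟨hne, hA⟩ := Finset.mem_erase.mp hA
  exact hne (Finset.eq_of_subset_of_card_le hAW (Finset.mem_powersetCard.mp hA).2.ge)

theorem isSMulRegular_xMon (W : Finset σ) :
    IsSMulRegular (MvPolynomial σ K ⧸ stanleyReisnerIdeal K (LowerSet.Iic W)) (xMon K W) := by
  classical
  rw [isSMulRegular_quotient_iff_mem_of_smul_mem]
  intro p hp
  rw [smul_eq_mul, mul_comm, ← smul_eq_mul, ← Submodule.mem_colon_singleton] at hp
  rwa [stanleyReisnerIdeal_colon_xMon, closedStar_Iic_self] at hp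

theorem IsVertexDecomposable.isWeaklyRegular [DecidableEq σ] {Δ : LowerSet (Finset σ)}
    {rs : List (MvPolynomial σ K)}
    (hsimplex : ∀ W : Finset σ, W.card = d →
      IsWeaklyRegular (MvPolynomial σ K ⧸ stanleyReisnerIdeal K (LowerSet.Iic W)) rs)
    (hΔ : IsVertexDecomposable d Δ) :
    IsWeaklyRegular (MvPolynomial σ K ⧸ stanleyReisnerIdeal K Δ) rs := by
  induction hΔ with
  | void =>
    have : Subsingleton (MvPolynomial σ K ⧸ stanleyReisnerIdeal K (⊥ : LowerSet (Finset σ))) :=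
      Ideal.Quotient.subsingleton_iff.mpr (stanleyReisnerIdeal_bot K)
    exact isWeaklyRegular_of_subsingleton rs
  | simplex W hW => exact hsimplex W hW
  | step Δ v _ _ hstar hdel =>
    rw [← stanleyReisnerIdeal_colon_xMon] at hstar
    rw [← stanleyReisnerIdeal_sup_span_xMon] at hdel
    exact isWeaklyRegular_quotient_of_colon_of_sup hstar hdel

theorem isWeaklyRegular_esymmSeq_Iic [Fintype σ] {W : Finset σ} (hW : W.card = d) :
    IsWeaklyRegular (MvPolynomial σ K ⧸ stanleyReisnerIdeal K (LowerSet.Iic W))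
      (esymmSeq σ K d) := by
  classical
  induction d generalizing W with
  | zero => exact .nil _ _
  | succ d ih =>
    have hsub := hW ▸ esymm_sub_xMon_mem K W
    apply isWeaklyRegular_quotient_cons
    · exact (isSMulRegular_quotient_iff_of_sub_mem hsub).mpr (isSMulRegular_xMon K W)
    · rw [sup_span_singleton_eq_of_sub_mem hsub, stanleyReisnerIdeal_sup_span_xMon]
      exact (isVertexDecomposable_deletion_Iic hW subset_rfl).isWeaklyRegular K
        fun _ hW' ↦ ih hW'

variable [DecidableEq σ] {Δ : LowerSet (Finset σ)}

theorem IsVertexDecomposable.ringKrullDim_le (hΔ : IsVertexDecomposable d Δ) :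
    ringKrullDim (MvPolynomial σ K ⧸ stanleyReisnerIdeal K Δ) ≤ d := by
  induction hΔ with
  | void =>
    have := Ideal.Quotient.subsingleton_iff.mpr (stanleyReisnerIdeal_bot K (σ := σ))
    rw [ringKrullDim_eq_bot_of_subsingleton]
    exact bot_le
  | simplex W hW => exact hW ▸ ringKrullDim_quotient_stanleyReisnerIdeal_Iic_le K W
  | step Δ v _ _ hstar hdel =>
    rw [← stanleyReisnerIdeal_colon_xMon] at hstar
    rw [← stanleyReisnerIdeal_sup_span_xMon] at hdel
    exact (ringKrullDim_quotient_le_max_colon_sup _ _).trans (max_le hstar hdel)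

theorem IsVertexDecomposable.isCMQuot [Finite σ] (hΔ : IsVertexDecomposable d Δ)
    (hface : ∅ ∈ Δ) : IsCMQuot K (stanleyReisnerIdeal K Δ) := by
  have := Fintype.ofFinite σ
  refine isCMQuot_of_isWeaklyRegular K (stanleyReisnerIdeal_le_span_X K hface)
    (mem_span_X_of_mem_esymmSeq K)
    (hΔ.isWeaklyRegular K fun W hW ↦ isWeaklyRegular_esymmSeq_Iic K hW) ?_
  rw [length_esymmSeq]
  exact hΔ.ringKrullDim_le K

end VertexDecomposable

section Forests

open Relation

variable {α : Type}

/-- Adjacency in the intersection graph of the family `E`; chains of intersecting members of `E`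
are expressed through its reflexive transitive closure. -/
def MeetIn (E : Finset (Finset α)) (A B : Finset α) : Prop :=
  A ∈ E ∧ B ∈ E ∧ ¬ Disjoint A B

theorem MeetIn.mono {E E' : Finset (Finset α)} (h : E ⊆ E') {A B : Finset α}
    (hAB : MeetIn E A B) : MeetIn E' A B :=
  ⟨h hAB.1, h hAB.2.1, hAB.2.2⟩

instance MeetIn.symm (E : Finset (Finset α)) : Std.Symm (MeetIn E) :=
  ⟨fun _ _ h ↦ ⟨h.2.1, h.1, fun hd ↦ h.2.2 hd.symm⟩⟩

/-- Connectedness of a family of sets, as an induced subgraph of the intersection graph. -/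
def IsChained (U : Finset (Finset α)) : Prop :=
  ∀ A ∈ U, ∀ B ∈ U, ReflTransGen (MeetIn U) A B

theorem IsChained.reflTransGen {U E : Finset (Finset α)} (hU : IsChained U) (hUE : U ⊆ E)
    {A B : Finset α} (hA : A ∈ U) (hB : B ∈ U) : ReflTransGen (MeetIn E) A B :=
  ReflTransGen.mono (fun _ _ ↦ MeetIn.mono hUE) A B (hU A hA B hB)

theorem IsChained.reflTransGen_insert_insert [DecidableEq α] {U : Finset (Finset α)}
    (hU : IsChained U) {x y u u' : Finset α} (hu : u ∈ U) (hxu : ¬ Disjoint x u) (hu' : u' ∈ U)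
    (hyu' : ¬ Disjoint y u') : ReflTransGen (MeetIn (insert x (insert y U))) x y := by
  have hsub : U ⊆ insert x (insert y U) := by grind
  refine .head (b := u) ⟨by simp, hsub hu, hxu⟩ (.tail (hU.reflTransGen hsub hu hu') ?_)
  exact ⟨hsub hu', by simp, fun hd ↦ hyu' hd.symm⟩

theorem IsChained.insert [DecidableEq α] {U : Finset (Finset α)} (hU : IsChained U)
    {x u : Finset α} (hu : u ∈ U) (hxu : ¬ Disjoint x u) : IsChained (insert x U) := by
  have reach (A : Finset α) (hA : A ∈ Insert.insert x U) :
      ReflTransGen (MeetIn (Insert.insert x U)) A u := by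
    obtain rfl | hA := Finset.mem_insert.mp hA
    · exact .single ⟨Finset.mem_insert_self _ U, Finset.mem_insert_of_mem hu, hxu⟩
    · exact hU.reflTransGen (Finset.subset_insert x U) hA hu
  exact fun A hA B hB ↦ (reach A hA).trans (symm (reach B hB))

theorem exists_maximal_isChained_avoiding {S : Finset (Finset α)} {w u : Finset α} (hw : w ∈ S)
    (hu : u ∈ S) (hwu : Disjoint w u) :
    ∃ U ⊆ S, U.Nonempty ∧ IsChained U ∧ (∃ w ∈ S, ∀ z ∈ U, Disjoint w z) ∧
      ∀ x ∈ S, x ∉ U → (∃ z ∈ U, ¬ Disjoint x z) →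
        ∀ w ∈ S, (∀ z ∈ U, Disjoint w z) → ¬ Disjoint w x := by
  classical
  let family := S.powerset.filter fun U ↦
    U.Nonempty ∧ IsChained U ∧ ∃ w ∈ S, ∀ z ∈ U, Disjoint w z
  have mem_family {U : Finset (Finset α)} : U ∈ family ↔
      U ⊆ S ∧ U.Nonempty ∧ IsChained U ∧ ∃ w ∈ S, ∀ z ∈ U, Disjoint w z := by
    simp only [family, Finset.mem_filter, Finset.mem_powerset]
  have singleton_mem : {u} ∈ family := by
    refine mem_family.mpr ⟨Finset.singleton_subset_iff.mpr hu, Finset.singleton_nonempty u, ?_,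
      w, hw, fun z hz ↦ Finset.mem_singleton.mp hz ▸ hwu⟩
    intro A hA B hB
    rw [Finset.mem_singleton.mp hA, Finset.mem_singleton.mp hB]
  obtain ⟨U, hU, hmax⟩ := Finset.exists_max_image family Finset.card ⟨{u}, singleton_mem⟩
  obtain ⟨hUS, hUne, hUchained, hUavoid⟩ := mem_family.mp hU
  refine ⟨U, hUS, hUne, hUchained, hUavoid, fun x hx hxU ⟨z, hz, hxz⟩ w' hw' hw'U hw'x ↦ ?_⟩
  have hmem : insert x U ∈ family := mem_family.mpr ⟨Finset.insert_subset hx hUS,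
    Finset.insert_nonempty x U, hUchained.insert hz hxz, w', hw', fun y hy ↦ by
      obtain rfl | hy := Finset.mem_insert.mp hy
      exacts [hw'x, hw'U y hy]⟩
  exact (hmax _ hmem).not_gt (Finset.card_lt_card (Finset.ssubset_insert hxU))

variable [DecidableEq α] {S T : Finset (Finset α)}

theorem HasLeafProp.mono (hS : HasLeafProp S) (hT : T ⊆ S) : HasLeafProp T :=
  fun U hU ↦ hS U (hU.trans hT)

theorem HasLeafProp.exists_leaf_joint (hS : HasLeafProp S) (hnt : S.Nontrivial) :
    ∃ F ∈ S, ∃ G ∈ S, G ≠ F ∧ ∀ H ∈ S, H ≠ F → F ∩ H ⊆ G := by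
  obtain ⟨F, hF, honly | ⟨G, hG, hGF, hjoint⟩⟩ := hS S subset_rfl hnt.nonempty
  · obtain ⟨H, hH, hHF⟩ := hnt.exists_ne F
    exact absurd (honly H hH) hHF
  · exact ⟨F, hF, G, hG, hGF, fun H hH hHF ↦ (hjoint H hH hHF).trans Finset.inter_subset_right⟩

theorem HasLeafProp.exists_mem_all_of_pairwise_meet (hS : HasLeafProp S) (hne : S.Nonempty)
    (hmeet : ∀ F ∈ S, ∀ G ∈ S, ¬ Disjoint F G) : ∃ v, ∀ F ∈ S, v ∈ F := by
  induction S using Finset.strongInduction with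
  | H S ih =>
  obtain ⟨E, rfl⟩ | hnt := hne.exists_eq_singleton_or_nontrivial
  · obtain ⟨v, hv, -⟩ := Finset.not_disjoint_iff.mp
      (hmeet E (Finset.mem_singleton_self E) E (Finset.mem_singleton_self E))
    exact ⟨v, fun F hF ↦ Finset.mem_singleton.mp hF ▸ hv⟩
  obtain ⟨F, hF, G, hG, hGF, hjoint⟩ := hS.exists_leaf_joint hnt
  by_cases hthird : ∃ H ∈ S, H ≠ F ∧ H ≠ G
  · obtain ⟨H, hH, hHF, hHG⟩ := hthird
    obtain ⟨v, hv⟩ := ih (S.erase G) (Finset.erase_ssubset hG)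
      (hS.mono (Finset.erase_subset G S)) ⟨F, Finset.mem_erase.mpr ⟨hGF.symm, hF⟩⟩
      fun A hA B hB ↦ hmeet A (Finset.mem_of_mem_erase hA) B (Finset.mem_of_mem_erase hB)
    have hvG : v ∈ G := hjoint H hH hHF <| Finset.mem_inter.mpr
      ⟨hv F (Finset.mem_erase.mpr ⟨hGF.symm, hF⟩), hv H (Finset.mem_erase.mpr ⟨hHG, hH⟩)⟩
    refine ⟨v, fun A hA ↦ ?_⟩
    by_cases hAG : A = G
    · exact hAG ▸ hvG
    · exact hv A (Finset.mem_erase.mpr ⟨hAG, hA⟩)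
  · obtain ⟨v, hvF, hvG⟩ := Finset.not_disjoint_iff.mp (hmeet F hF G hG)
    refine ⟨v, fun A hA ↦ ?_⟩
    by_cases hAF : A = F
    · exact hAF ▸ hvF
    · have hAG : A = G := by_contra fun hAG ↦ hthird ⟨A, hA, hAF, hAG⟩
      exact hAG ▸ hvG

theorem reflTransGen_meetIn_erase {E : Finset (Finset α)} {F G A B : Finset α} (hGF : G ≠ F)
    (hG : ∀ H ∈ E, H ≠ F → ¬ Disjoint F H → G ∈ E ∧ ¬ Disjoint G H) (hA : A ≠ F) (hB : B ≠ F)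
    (h : ReflTransGen (MeetIn E) A B) : ReflTransGen (MeetIn (E.erase F)) A B := by
  have hlift : ∀ X Y, MeetIn E X Y → ReflTransGen (MeetIn (E.erase F))
      (if X = F then G else X) (if Y = F then G else Y) := by
    rintro X Y ⟨hX, hY, hXY⟩
    have hne_mem {H : Finset α} (hHF : H ≠ F) (hH : H ∈ E) : H ∈ E.erase F :=
      Finset.mem_erase.mpr ⟨hHF, hH⟩
    split_ifs with hXF hYF hYF
    · exact .refl
    · obtain ⟨hGE, hGY⟩ := hG Y hY hYF (hXF ▸ hXY)
      exact .single ⟨hne_mem hGF hGE, hne_mem hYF hY, hGY⟩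
    · obtain ⟨hGE, hGX⟩ := hG X hX hXF fun hd ↦ hXY (hYF ▸ hd.symm)
      exact .single ⟨hne_mem hXF hX, hne_mem hGF hGE, fun hd ↦ hGX hd.symm⟩
    · exact .single ⟨hne_mem hXF hX, hne_mem hYF hY, hXY⟩
  simpa only [Function.onFun, if_neg hA, if_neg hB] using ReflTransGen.lift' _ hlift _ _ h

theorem exists_mem_of_inter_subset {F G H : Finset α} (hFHG : F ∩ H ⊆ G) (hFH : ¬ Disjoint F H) :
    ∃ v ∈ F, v ∈ H ∧ v ∈ G := by
  obtain ⟨v, hvF, hvH⟩ := Finset.not_disjoint_iff.mp hFH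
  exact ⟨v, hvF, hvH, hFHG (Finset.mem_inter.mpr ⟨hvF, hvH⟩)⟩

theorem not_disjoint_of_chain_of_leaf_end {E : Finset (Finset α)} {w x y G : Finset α}
    (hwx : ¬ Disjoint w x) (hwy : ¬ Disjoint w y)
    (hE : ∀ z ∈ E, z = x ∨ z = y ∨ Disjoint w z) (hG : G ∈ insert w E) (hGx : G ≠ x)
    (hjoint : ∀ H ∈ insert w E, H ≠ x → x ∩ H ⊆ G)
    (hchain : ReflTransGen (MeetIn E) x y) : ¬ Disjoint x y := by
  intro hxy
  obtain rfl : G = w := by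
    obtain ⟨v, hvx, hvw, hvG⟩ := exists_mem_of_inter_subset
      (hjoint w (Finset.mem_insert_self w E) fun h ↦ hwy (h ▸ hxy)) fun hd ↦ hwx hd.symm
    refine (Finset.mem_insert.mp hG).resolve_right fun hGE ↦ ?_
    obtain rfl | rfl | hGw := hE G hGE
    · exact hGx rfl
    · exact Finset.disjoint_left.mp hxy hvx hvG
    · exact Finset.disjoint_left.mp hGw hvw hvG
  have isolated (H : Finset α) (hxH : MeetIn E x H) : H = x := by
    by_contra hHx
    obtain ⟨v, -, hvH, hvG⟩ := exists_mem_of_inter_subset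
      (hjoint H (Finset.mem_insert_of_mem hxH.2.1) hHx) hxH.2.2
    obtain rfl | rfl | hHG := hE H hxH.2.1
    · exact hHx rfl
    · exact hxH.2.2 hxy
    · exact Finset.disjoint_left.mp hHG hvG hvH
  have stays (H : Finset α) (h : ReflTransGen (MeetIn E) x H) : H = x := by
    induction h with
    | refl => rfl
    | tail _ hstep ih => exact isolated _ (ih ▸ hstep)
  rw [stays y hchain, disjoint_self] at hxy
  exact hwx (hxy ▸ disjoint_bot_right)

theorem not_disjoint_of_leaf_apex {E : Finset (Finset α)} {w x y G : Finset α}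
    (hwx : ¬ Disjoint w x) (hwy : ¬ Disjoint w y)
    (hE : ∀ z ∈ E, z = x ∨ z = y ∨ Disjoint w z) (hG : G ∈ E) (hxG : w ∩ x ⊆ G)
    (hyG : w ∩ y ⊆ G) : ¬ Disjoint x y := by
  obtain ⟨v, hvw, hvx, hvG⟩ := exists_mem_of_inter_subset hxG hwx
  obtain ⟨u, -, huy, huG⟩ := exists_mem_of_inter_subset hyG hwy
  obtain rfl | rfl | hwG := hE G hG
  · exact Finset.not_disjoint_iff.mpr ⟨u, huG, huy⟩
  · exact Finset.not_disjoint_iff.mpr ⟨v, hvx, hvG⟩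
  · exact absurd hvG (Finset.disjoint_left.mp hwG hvw)

/- A chain from `x` to `y` whose interior avoids `w` is, together with `w`, a cycle in the
intersection graph. A leaf in its interior can be bypassed through its joint, and a leaf among
`w`, `x`, `y` forces the chord from `x` to `y`. -/
theorem HasLeafProp.not_disjoint_of_chain {E : Finset (Finset α)} {w x y : Finset α}
    (hS : HasLeafProp (insert w E)) (hwx : ¬ Disjoint w x) (hwy : ¬ Disjoint w y)
    (hE : ∀ z ∈ E, z = x ∨ z = y ∨ Disjoint w z)
    (hchain : ReflTransGen (MeetIn E) x y) : ¬ Disjoint x y := by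
  induction E using Finset.strongInduction with
  | H E ih =>
  intro hxy
  have hxw : x ≠ w := fun h ↦ hwy (h ▸ hxy)
  have hyw : y ≠ w := fun h ↦ hwx (h ▸ hxy.symm)
  obtain hyx | ⟨_, hxE, -⟩ := hchain.cases_head
  · rw [hyx, disjoint_self] at hxy
    exact hwy (hxy ▸ disjoint_bot_right)
  obtain hxy' | ⟨_, -, hyE⟩ := hchain.cases_tail
  · rw [← hxy', disjoint_self] at hxy
    exact hwy (hxy ▸ disjoint_bot_right)
  have hxS := Finset.mem_insert_of_mem (b := w) hxE.1
  have hyS := Finset.mem_insert_of_mem (b := w) hyE.2.1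
  obtain ⟨F, hF, G, hG, hGF, hjoint⟩ := hS.exists_leaf_joint
    ⟨x, hxS, w, Finset.mem_insert_self w E, hxw⟩
  by_cases hFx : F = x
  · subst hFx
    exact not_disjoint_of_chain_of_leaf_end hwx hwy hE hG hGF hjoint hchain hxy
  by_cases hFy : F = y
  · subst hFy
    exact not_disjoint_of_chain_of_leaf_end hwy hwx (fun z hz ↦ or_left_comm.mp (hE z hz)) hG hGF
      hjoint (symm hchain) hxy.symm
  obtain rfl | hFE := Finset.mem_insert.mp hF
  · exact not_disjoint_of_leaf_apex hwx hwy hE ((Finset.mem_insert.mp hG).resolve_left hGF)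
      (hjoint x hxS hxw) (hjoint y hyS hyw) hxy
  · have hwF : Disjoint w F := ((hE F hFE).resolve_left hFx).resolve_left hFy
    have meets_joint (H : Finset α) (hH : H ∈ E) (hHF : H ≠ F) (hFH : ¬ Disjoint F H) :
        G ∈ E ∧ ¬ Disjoint G H := by
      obtain ⟨v, hvF, hvH, hvG⟩ :=
        exists_mem_of_inter_subset (hjoint H (Finset.mem_insert_of_mem hH) hHF) hFH
      refine ⟨(Finset.mem_insert.mp hG).resolve_left ?_, Finset.not_disjoint_iff.mpr ⟨v, hvG, hvH⟩⟩
      rintro rfl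
      exact Finset.disjoint_left.mp hwF hvG hvF
    exact ih (E.erase F) (Finset.erase_ssubset hFE)
      (hS.mono (Finset.insert_subset_insert w (Finset.erase_subset F E)))
      (fun z hz ↦ hE z (Finset.mem_of_mem_erase hz))
      (reflTransGen_meetIn_erase hGF meets_joint (Ne.symm hFx) (Ne.symm hFy) hchain) hxy

/- Dirac's argument for a simplicial vertex of a chordal graph: all sets adjacent to a maximal
connected non-dominating family `U` are adjacent to everything `U` misses and to each other. -/
theorem HasLeafProp.exists_neighbors_meet (hS : HasLeafProp S) (hne : S.Nonempty)
    (hmem_ne : ∀ F ∈ S, F.Nonempty) :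
    ∃ e ∈ S, ∀ x ∈ S, ∀ y ∈ S, ¬ Disjoint e x → ¬ Disjoint e y → ¬ Disjoint x y := by
  induction S using Finset.strongInduction with
  | H S ih =>
  by_cases hmeet : ∀ F ∈ S, ∀ G ∈ S, ¬ Disjoint F G
  · obtain ⟨e, he⟩ := hne
    exact ⟨e, he, fun x hx y hy _ _ ↦ hmeet x hx y hy⟩
  push Not at hmeet
  obtain ⟨w, hw, u, hu, hwu⟩ := hmeet
  obtain ⟨U, hUS, ⟨u, hu⟩, hU, ⟨w, hw, hwU⟩, hmax⟩ := exists_maximal_isChained_avoiding hw hu hwu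
  let W := S.filter fun z ↦ ∀ u ∈ U, Disjoint z u
  have hWS : W ⊂ S := Finset.filter_ssubset.mpr
    ⟨u, hUS hu, fun h ↦ (hmem_ne u (hUS hu)).ne_empty (disjoint_self.mp (h u hu))⟩
  obtain ⟨e, he, hclique⟩ := ih W hWS (hS.mono hWS.subset)
    ⟨w, Finset.mem_filter.mpr ⟨hw, hwU⟩⟩ fun F hF ↦ hmem_ne F (hWS.subset hF)
  obtain ⟨heS, heU⟩ := Finset.mem_filter.mp he
  have adjacent {x : Finset α} (hx : x ∈ S) (hxW : x ∉ W) : ∃ z ∈ U, ¬ Disjoint x z := by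
    by_contra! h
    exact hxW (Finset.mem_filter.mpr ⟨hx, h⟩)
  have meets_W {x y : Finset α} (hx : x ∈ S) (hxW : x ∉ W) (hex : ¬ Disjoint e x) (hy : y ∈ W) :
      ¬ Disjoint y x :=
    hmax x hx (fun hxU ↦ hex (heU x hxU)) (adjacent hx hxW) y (hWS.subset hy)
      (Finset.mem_filter.mp hy).2
  refine ⟨e, heS, fun x hx y hy hex hey ↦ ?_⟩
  by_cases hxW : x ∈ W <;> by_cases hyW : y ∈ W
  · exact hclique x hxW y hyW hex hey
  · exact meets_W hy hyW hey hxW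
  · exact fun hd ↦ meets_W hx hxW hex hyW hd.symm
  obtain ⟨z, hz, hxz⟩ := adjacent hx hxW
  obtain ⟨z', hz', hyz'⟩ := adjacent hy hyW
  refine HasLeafProp.not_disjoint_of_chain (E := insert x (insert y U)) (hS.mono ?_) hex hey ?_
    (hU.reflTransGen_insert_insert hz hxz hz' hyz')
  · exact Finset.insert_subset heS (Finset.insert_subset hx (Finset.insert_subset hy hUS))
  · simp only [Finset.mem_insert]
    exact fun z hz ↦ hz.imp_right fun hz ↦ hz.imp_right (heU z)

theorem HasLeafProp.exists_common_vertex_of_neighbors (hS : HasLeafProp S) (hne : S.Nonempty)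
    (hmem_ne : ∀ F ∈ S, F.Nonempty) :
    ∃ e ∈ S, ∃ v ∈ e, ∀ F ∈ S, ¬ Disjoint e F → v ∈ F := by
  obtain ⟨e, he, hclique⟩ := hS.exists_neighbors_meet hne hmem_ne
  have he_self : ¬ Disjoint e e := fun h ↦ (hmem_ne e he).ne_empty (disjoint_self.mp h)
  have hN := hS.mono (Finset.filter_subset (¬ Disjoint e ·) S)
  obtain ⟨v, hv⟩ := hN.exists_mem_all_of_pairwise_meet ⟨e, Finset.mem_filter.mpr ⟨he, he_self⟩⟩
    fun F hF G hG ↦ by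
      rw [Finset.mem_filter] at hF hG
      exact hclique F hF.1 G hG.1 hF.2 hG.2
  simp only [Finset.mem_filter, and_imp] at hv
  exact ⟨e, he, v, hv e he he_self, hv⟩

end Forests

section BlockForests

variable {α : Type} [DecidableEq α] {H B : Finset (Finset α)} {b A S Z : Finset α} {k d : ℕ}

theorem isMatchingOf_iff_pairwiseDisjoint {M : Finset (Finset α)} :
    IsMatchingOf H M ↔ M ⊆ H ∧ (M : Set (Finset α)).PairwiseDisjoint id := by
  simp only [IsMatchingOf, ← Finset.disjoint_iff_inter_eq_empty]
  rfl

/-- `A` contains a matching of size `k` of the family `H`. -/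
def ContainsMatching (H : Finset (Finset α)) (k : ℕ) (A : Finset α) : Prop :=
  ∃ M, IsMatchingOf H M ∧ M.card = k ∧ ∀ F ∈ M, F ⊆ A

theorem ContainsMatching.mono (hAS : A ⊆ S) (h : ContainsMatching H k A) :
    ContainsMatching H k S := by
  obtain ⟨M, hM, hcard, hMA⟩ := h
  exact ⟨M, hM, hcard, fun F hF ↦ (hMA F hF).trans hAS⟩

theorem containsMatching_zero (H : Finset (Finset α)) (A : Finset α) : ContainsMatching H 0 A :=
  ⟨∅, ⟨Finset.empty_subset H, by simp⟩, rfl, by simp⟩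

/-- The complex of the sets that avoid `Z` and contain no matching of size `k` of `H`. -/
def matchingFree (Z : Finset α) (H : Finset (Finset α)) (k : ℕ) : LowerSet (Finset α) :=
  ⟨{A | Disjoint A Z ∧ ¬ ContainsMatching H k A}, fun _ _ hle hA ↦
    ⟨Finset.disjoint_of_subset_left hle hA.1, fun h ↦ hA.2 (h.mono hle)⟩⟩

theorem mem_matchingFree : A ∈ matchingFree Z H k ↔ Disjoint A Z ∧ ¬ ContainsMatching H k A :=
  Iff.rfl

/-- A forest `H` with a distinguished family `B` of pairwise disjoint members, the blocks, which
cover all vertices and on each of which the members of `H` leave a chain of traces. Grafted forests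
are of this form, and unlike them block forests are stable under `contractBlock`. -/
structure IsBlockForest (H B : Finset (Finset α)) : Prop where
  hasLeafProp : HasLeafProp H
  subset : B ⊆ H
  pairwiseDisjoint : (B : Set (Finset α)).PairwiseDisjoint id
  nonempty : ∀ h ∈ H, h.Nonempty
  exists_block : ∀ h ∈ H, ∀ v ∈ h, ∃ b ∈ B, v ∈ b
  chain : ∀ b ∈ B, ∀ h ∈ H, ∀ h' ∈ H, b ∩ h ⊆ h' ∨ b ∩ h' ⊆ h

theorem IsBlockForest.not_disjoint_of_block (hH : IsBlockForest H B) (hb : b ∈ B)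
    {h h' : Finset α} (hh : h ∈ H) (hh' : h' ∈ H) (hbh : ¬ Disjoint b h) (hbh' : ¬ Disjoint b h') :
    ¬ Disjoint h h' := by
  obtain hsub | hsub := hH.chain b hb h hh h' hh'
  · obtain ⟨v, -, hvh, hvh'⟩ := exists_mem_of_inter_subset hsub hbh
    exact Finset.not_disjoint_iff.mpr ⟨v, hvh, hvh'⟩
  · obtain ⟨v, -, hvh', hvh⟩ := exists_mem_of_inter_subset hsub hbh'
    exact Finset.not_disjoint_iff.mpr ⟨v, hvh, hvh'⟩

theorem IsBlockForest.le_card_of_containsMatching (hH : IsBlockForest H B)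
    (hA : ContainsMatching H k A) : k ≤ B.card := by
  obtain ⟨M, hM, rfl, -⟩ := hA
  obtain ⟨hMH, hMdisj⟩ := isMatchingOf_iff_pairwiseDisjoint.mp hM
  refine Finset.card_le_card_of_forall_subsingleton (fun h b ↦ ¬ Disjoint b h) ?_ ?_
  · intro h hh
    obtain ⟨v, hv⟩ := hH.nonempty h (hMH hh)
    obtain ⟨b, hb, hvb⟩ := hH.exists_block h (hMH hh) v hv
    exact ⟨b, hb, Finset.not_disjoint_iff.mpr ⟨v, hvb, hv⟩⟩
  · rintro b hb h ⟨hh, hbh⟩ h' ⟨hh', hbh'⟩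
    exact hMdisj.elim hh hh' (hH.not_disjoint_of_block hb (hMH hh) (hMH hh') hbh hbh')

/-- A block `b` is special if members of `H` that are not contained in `b` and meet each other do so
outside `b`. -/
def IsSpecialBlock (H : Finset (Finset α)) (b : Finset α) : Prop :=
  ∀ h ∈ H, ∀ h' ∈ H, ¬ h ⊆ b → ¬ h' ⊆ b → Disjoint (h \ b) (h' \ b) → Disjoint h h'

theorem IsBlockForest.isSpecialBlock (hH : IsBlockForest H B) (hb : b ∈ B)
    (hmeet : ∀ h ∈ H, ∀ h' ∈ H, (∀ c ∈ B, ¬ h ⊆ c) → (∀ c ∈ B, ¬ h' ⊆ c) → ¬ Disjoint b h →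
      ¬ Disjoint b h' → ¬ Disjoint (h \ b) (h' \ b)) : IsSpecialBlock H b := by
  intro h hh h' hh' hhb hhb' hdisj
  have not_subset_block {g : Finset α} (hgb : ¬ g ⊆ b) (hbg : ¬ Disjoint b g) (c : Finset α)
      (hc : c ∈ B) : ¬ g ⊆ c := by
    intro hgc
    obtain rfl := hH.pairwiseDisjoint.elim hb hc fun hd ↦
      hbg (Finset.disjoint_of_subset_right hgc hd)
    exact hgb hgc
  refine Finset.disjoint_left.mpr fun v hv hv' ↦ ?_
  by_cases hvb : v ∈ b
  · have hbh := Finset.not_disjoint_iff.mpr ⟨v, hvb, hv⟩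
    have hbh' := Finset.not_disjoint_iff.mpr ⟨v, hvb, hv'⟩
    exact hmeet h hh h' hh' (not_subset_block hhb hbh) (not_subset_block hhb' hbh') hbh hbh' hdisj
  · exact Finset.disjoint_left.mp hdisj (Finset.mem_sdiff.mpr ⟨hv, hvb⟩)
      (Finset.mem_sdiff.mpr ⟨hv', hvb⟩)

/- Among the members not inside a block choose `e` whose neighbors share a vertex `v`; a block that
meets `e` and does not contain `v` is special. -/
theorem IsBlockForest.exists_isSpecialBlock (hH : IsBlockForest H B) (hB : B.Nonempty) :
    ∃ b ∈ B, IsSpecialBlock H b := by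
  let E := H.filter fun h ↦ ∀ c ∈ B, ¬ h ⊆ c
  obtain hE | hE := E.eq_empty_or_nonempty
  · obtain ⟨b, hb⟩ := hB
    refine ⟨b, hb, hH.isSpecialBlock hb fun h hh _ _ hhB ↦ ?_⟩
    exact absurd (Finset.mem_filter.mpr ⟨hh, hhB⟩) (Finset.eq_empty_iff_forall_notMem.mp hE h)
  obtain ⟨e, he, v, hve, hv⟩ := (hH.hasLeafProp.mono (Finset.filter_subset _ H))
    |>.exists_common_vertex_of_neighbors hE fun h hh ↦ hH.nonempty h (Finset.mem_filter.mp hh).1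
  obtain ⟨heH, heB⟩ := Finset.mem_filter.mp he
  obtain ⟨c, hc, hvc⟩ := hH.exists_block e heH v hve
  obtain ⟨w, hwe, hwc⟩ := Finset.not_subset.mp (heB c hc)
  obtain ⟨b, hb, hwb⟩ := hH.exists_block e heH w hwe
  have hvb : v ∉ b := fun hvb ↦ hwc (hH.pairwiseDisjoint.elim_finset hc hb v hvc hvb ▸ hwb)
  have v_mem {h : Finset α} (hh : h ∈ H) (hhB : ∀ c ∈ B, ¬ h ⊆ c) (hbh : ¬ Disjoint b h) :
      v ∈ h \ b :=
    Finset.mem_sdiff.mpr ⟨hv h (Finset.mem_filter.mpr ⟨hh, hhB⟩) (hH.not_disjoint_of_block hb heH hh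
      (Finset.not_disjoint_iff.mpr ⟨w, hwb, hwe⟩) hbh), hvb⟩
  exact ⟨b, hb, hH.isSpecialBlock hb fun h hh h' hh' hhB hhB' hbh hbh' ↦
    Finset.not_disjoint_iff.mpr ⟨v, v_mem hh hhB hbh, v_mem hh' hhB' hbh'⟩⟩

theorem exists_subset_injOn_image_sdiff_eq {M : Finset (Finset α)}
    (hM : M ⊆ H.image (· \ b)) :
    ∃ U ⊆ H, Set.InjOn (· \ b) (U : Set (Finset α)) ∧ U.image (· \ b) = M := by
  have hsurj : Set.SurjOn (· \ b) (H : Set (Finset α)) (M : Set (Finset α)) := by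
    intro F hF
    simpa using Finset.mem_image.mp (hM hF)
  obtain ⟨U, hUH, hinj, himage⟩ := Finset.exists_subset_injOn_image_eq_of_surjOn _ _ hsurj
  exact ⟨U, Finset.coe_subset.mp hUH, hinj, himage⟩

theorem HasLeafProp.image_sdiff (hH : HasLeafProp H) (b : Finset α) :
    HasLeafProp (H.image (· \ b)) := by
  intro T hT hne
  obtain ⟨U, hUH, hinj, rfl⟩ := exists_subset_injOn_image_sdiff_eq hT
  obtain ⟨F, hF, hleaf⟩ := hH U hUH (Finset.image_nonempty.mp hne)
  refine ⟨F \ b, Finset.mem_image_of_mem _ hF, ?_⟩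
  simp only [Finset.forall_mem_image, Finset.exists_mem_image]
  refine hleaf.imp (fun honly E hE ↦ by rw [honly E hE]) ?_
  rintro ⟨G, hG, hGF, hjoint⟩
  refine ⟨G, hG, hinj.ne hG hF hGF, fun E hE hEF ↦ ?_⟩
  calc F \ b ∩ (E \ b) = (F ∩ E) \ b := inf_sdiff.symm
    _ ⊆ (F ∩ G) \ b := Finset.sdiff_subset_sdiff (hjoint E hE fun h ↦ hEF (h ▸ rfl)) subset_rfl
    _ = F \ b ∩ (G \ b) := inf_sdiff

/-- The traces outside `b` of those members of `H` that meet `b` only in `A`. -/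
def contractBlock (H : Finset (Finset α)) (b A : Finset α) : Finset (Finset α) :=
  (H.filter (· ∩ b ⊆ A)).image (· \ b)

theorem mem_contractBlock {F : Finset α} :
    F ∈ contractBlock H b A ↔ ∃ h ∈ H, h ∩ b ⊆ A ∧ h \ b = F := by
  simp only [contractBlock, Finset.mem_image, Finset.mem_filter, and_assoc]

theorem contractBlock_empty (H : Finset (Finset α)) (b : Finset α) :
    contractBlock H b ∅ = H.filter (Disjoint · b) := by
  ext F
  simp only [mem_contractBlock, Finset.subset_empty, ← Finset.disjoint_iff_inter_eq_empty,
    Finset.mem_filter]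
  constructor
  · rintro ⟨h, hh, hdisj, rfl⟩
    rw [Finset.sdiff_eq_self_of_disjoint hdisj]
    exact ⟨hh, hdisj⟩
  · exact fun ⟨hF, hdisj⟩ ↦ ⟨F, hF, hdisj, Finset.sdiff_eq_self_of_disjoint hdisj⟩

theorem not_subset_of_inter_subset {h : Finset α} (hA : ¬ h ⊆ A) (hhb : h ∩ b ⊆ A) : ¬ h ⊆ b :=
  fun h' ↦ hA (Finset.inter_eq_left.mpr h' ▸ hhb)

theorem IsBlockForest.isBlockForest_contractBlock (hH : IsBlockForest H B) (hb : b ∈ B)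
    (hA : ∀ h ∈ H, ¬ h ⊆ A) : IsBlockForest (contractBlock H b A) (B.erase b) where
  hasLeafProp := (hH.hasLeafProp.mono (Finset.filter_subset _ H)).image_sdiff b
  subset c hc := by
    obtain ⟨hcb, hc⟩ := Finset.mem_erase.mp hc
    have hdisj : Disjoint c b := hH.pairwiseDisjoint hc hb hcb
    exact mem_contractBlock.mpr ⟨c, hH.subset hc,
      (Finset.disjoint_iff_inter_eq_empty.mp hdisj).trans_subset (Finset.empty_subset A),
      Finset.sdiff_eq_self_of_disjoint hdisj⟩
  pairwiseDisjoint := hH.pairwiseDisjoint.subset (Finset.coe_subset.mpr (Finset.erase_subset b B))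
  nonempty F hF := by
    obtain ⟨h, hh, hhA, rfl⟩ := mem_contractBlock.mp hF
    exact Finset.sdiff_nonempty.mpr (not_subset_of_inter_subset (hA h hh) hhA)
  exists_block F hF v hv := by
    obtain ⟨h, hh, -, rfl⟩ := mem_contractBlock.mp hF
    obtain ⟨hvh, hvb⟩ := Finset.mem_sdiff.mp hv
    obtain ⟨c, hc, hvc⟩ := hH.exists_block h hh v hvh
    exact ⟨c, Finset.mem_erase.mpr ⟨fun h ↦ hvb (h ▸ hvc), hc⟩, hvc⟩
  chain c hc F hF F' hF' := by
    obtain ⟨h, hh, -, rfl⟩ := mem_contractBlock.mp hF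
    obtain ⟨h', hh', -, rfl⟩ := mem_contractBlock.mp hF'
    rw [← Finset.inter_sdiff_assoc, ← Finset.inter_sdiff_assoc]
    exact (hH.chain c (Finset.mem_of_mem_erase hc) h hh h' hh').imp
      (Finset.sdiff_subset_sdiff · subset_rfl) (Finset.sdiff_subset_sdiff · subset_rfl)

theorem ContainsMatching.succ_of_avoiding {h : Finset α} (hh : h ∈ H) (hne : h.Nonempty)
    (hhb : h ⊆ b) (hhA : h ⊆ A) (hS : ContainsMatching (H.filter (Disjoint · b)) k S) :
    ContainsMatching H (k + 1) (S ∪ A) := by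
  obtain ⟨M, hM, rfl, hMS⟩ := hS
  obtain ⟨hMH, hMdisj⟩ := isMatchingOf_iff_pairwiseDisjoint.mp hM
  have disjoint_h (F : Finset α) (hF : F ∈ M) : Disjoint h F :=
    (Finset.disjoint_of_subset_right hhb (Finset.mem_filter.mp (hMH hF)).2).symm
  have hhM : h ∉ M := fun hhM ↦ hne.ne_empty (disjoint_self.mp (disjoint_h h hhM))
  refine ⟨insert h M, isMatchingOf_iff_pairwiseDisjoint.mpr ⟨Finset.insert_subset hh
    (hMH.trans (Finset.filter_subset _ H)), ?_⟩, Finset.card_insert_of_notMem hhM, ?_⟩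
  · rw [Finset.coe_insert]
    exact hMdisj.insert fun F hF _ ↦ disjoint_h F hF
  · rw [Finset.forall_mem_insert]
    exact ⟨hhA.trans Finset.subset_union_right, fun F hF ↦
      (hMS F hF).trans Finset.subset_union_left⟩

/- The members of a matching meeting a fixed block meet each other, so there is at most one. -/
theorem IsBlockForest.containsMatching_avoiding (hH : IsBlockForest H B) (hb : b ∈ B) (hAb : A ⊆ b)
    (hS : ContainsMatching H (k + 1) (S ∪ A)) :
    ContainsMatching (H.filter (Disjoint · b)) k S := by
  obtain ⟨M, hM, hcard, hMS⟩ := hS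
  obtain ⟨hMH, hMdisj⟩ := isMatchingOf_iff_pairwiseDisjoint.mp hM
  have card_meeting_le : (M.filter (¬ Disjoint · b)).card ≤ 1 := by
    refine Finset.card_le_one.mpr fun F hF G hG ↦ ?_
    obtain ⟨hF, hFb⟩ := Finset.mem_filter.mp hF
    obtain ⟨hG, hGb⟩ := Finset.mem_filter.mp hG
    rw [disjoint_comm] at hFb hGb
    exact hMdisj.elim hF hG (hH.not_disjoint_of_block hb (hMH hF) (hMH hG) hFb hGb)
  have card_split := Finset.card_filter_add_card_filter_not (s := M) (Disjoint · b)
  obtain ⟨N, hN, hNcard⟩ := Finset.exists_subset_card_eq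
    (s := M.filter (Disjoint · b)) (n := k) (by omega)
  refine ⟨N, isMatchingOf_iff_pairwiseDisjoint.mpr
    ⟨hN.trans (Finset.filter_subset_filter _ hMH), hMdisj.subset fun F hF ↦
      (Finset.mem_filter.mp (hN hF)).1⟩, hNcard, fun F hF ↦ ?_⟩
  obtain ⟨hFM, hFb⟩ := Finset.mem_filter.mp (hN hF)
  exact (Finset.disjoint_of_subset_right hAb hFb).left_le_of_le_sup_right (hMS F hFM)

theorem IsBlockForest.closedStar_matchingFree (hH : IsBlockForest H B) (hb : b ∈ B) (hAb : A ⊆ b)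
    (hbZ : Disjoint b Z) {h : Finset α} (hh : h ∈ H) (hhA : h ⊆ A) :
    closedStar (matchingFree Z H (k + 1)) A = matchingFree Z (contractBlock H b ∅) k := by
  ext S
  have hAZ : Disjoint A Z := Finset.disjoint_of_subset_left hAb hbZ
  have hmatching : ContainsMatching H (k + 1) (S ∪ A) ↔
      ContainsMatching (H.filter (Disjoint · b)) k S :=
    ⟨hH.containsMatching_avoiding hb hAb,
      .succ_of_avoiding hh (hH.nonempty h hh) (hhA.trans hAb) hhA⟩
  rw [SetLike.mem_coe, SetLike.mem_coe, mem_closedStar, mem_matchingFree, mem_matchingFree,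
    hmatching, contractBlock_empty, Finset.disjoint_union_left, and_iff_left hAZ]

theorem ContainsMatching.of_contractBlock (hb : IsSpecialBlock H b) (hA : ∀ h ∈ H, ¬ h ⊆ A)
    (hS : ContainsMatching (contractBlock H b A) k S) : ContainsMatching H k (S ∪ A) := by
  obtain ⟨M, hM, rfl, hMS⟩ := hS
  obtain ⟨hMH, hMdisj⟩ := isMatchingOf_iff_pairwiseDisjoint.mp hM
  obtain ⟨U, hUH, hinj, rfl⟩ := exists_subset_injOn_image_sdiff_eq hMH
  have mem_H {F : Finset α} (hF : F ∈ U) : F ∈ H := (Finset.mem_filter.mp (hUH hF)).1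
  have trace_subset {F : Finset α} (hF : F ∈ U) : F ∩ b ⊆ A := (Finset.mem_filter.mp (hUH hF)).2
  have not_subset {F : Finset α} (hF : F ∈ U) : ¬ F ⊆ b :=
    not_subset_of_inter_subset (hA F (mem_H hF)) (trace_subset hF)
  refine ⟨U, isMatchingOf_iff_pairwiseDisjoint.mpr ⟨fun F ↦ mem_H, fun F hF G hG hFG ↦ ?_⟩,
    (Finset.card_image_of_injOn hinj).symm, fun F hF ↦ ?_⟩
  · exact hb F (mem_H hF) G (mem_H hG) (not_subset hF) (not_subset hG)
      (hMdisj (Finset.mem_coe.mpr (Finset.mem_image_of_mem _ hF))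
        (Finset.mem_coe.mpr (Finset.mem_image_of_mem _ hG)) (hinj.ne hF hG hFG))
  · rw [← Finset.sdiff_union_inter F b]
    exact Finset.union_subset_union (hMS _ (Finset.mem_image_of_mem _ hF)) (trace_subset hF)

theorem ContainsMatching.to_contractBlock (hAb : A ⊆ b) (hA : ∀ h ∈ H, ¬ h ⊆ A)
    (htrace : ∀ h ∈ H, h ⊆ S ∪ A → h ∩ b ⊆ A) (hS : ContainsMatching H k (S ∪ A)) :
    ContainsMatching (contractBlock H b A) k S := by
  obtain ⟨M, hM, rfl, hMS⟩ := hS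
  obtain ⟨hMH, hMdisj⟩ := isMatchingOf_iff_pairwiseDisjoint.mp hM
  have hinj : Set.InjOn (· \ b) (M : Set (Finset α)) := by
    intro F hF G hG (hFG : F \ b = G \ b)
    have hne : F \ b ≠ ∅ := (Finset.sdiff_nonempty.mpr (not_subset_of_inter_subset
      (hA F (hMH hF)) (htrace F (hMH hF) (hMS F hF)))).ne_empty
    exact hMdisj.elim hF hG fun hd ↦ hne (disjoint_self.mp
      (Finset.disjoint_of_subset_left Finset.sdiff_subset
        (Finset.disjoint_of_subset_right (hFG.trans_subset Finset.sdiff_subset) hd)))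
  refine ⟨M.image (· \ b), isMatchingOf_iff_pairwiseDisjoint.mpr
    ⟨Finset.image_subset_image fun F hF ↦ Finset.mem_filter.mpr
      ⟨hMH hF, htrace F (hMH hF) (hMS F hF)⟩, ?_⟩, Finset.card_image_of_injOn hinj, ?_⟩
  · rw [Finset.coe_image, Set.InjOn.pairwiseDisjoint_image hinj]
    exact hMdisj.mono fun F ↦ Finset.sdiff_subset
  · rw [Finset.forall_mem_image]
    intro F hF
    exact (Finset.disjoint_of_subset_right hAb Finset.sdiff_disjoint).left_le_of_le_sup_right
      (Finset.sdiff_subset.trans (hMS F hF))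

/-- An initial segment of `b` for a linear order on `b` in which all traces of members of `H` are
initial segments. -/
def IsInitialSegment (H : Finset (Finset α)) (b A : Finset α) : Prop :=
  A ⊆ b ∧ ∀ h ∈ H, h ∩ b ⊆ A ∨ A ⊆ h

theorem deletion_closedStar_matchingFree (hb : IsSpecialBlock H b) (hbZ : Disjoint b Z)
    (hAb : A ⊆ b) (hA : ∀ h ∈ H, ¬ h ⊆ A) {v : α} (hvA : v ∉ A)
    (hsegment : IsInitialSegment H b (insert v A)) :
    deletion (closedStar (matchingFree Z H k) A) {v} =
      matchingFree (insert v Z) (contractBlock H b A) k := by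
  ext S
  have hAZ : Disjoint A Z := Finset.disjoint_of_subset_left hAb hbZ
  have htrace (hvS : v ∉ S) (h : Finset α) (hh : h ∈ H) (hhS : h ⊆ S ∪ A) : h ∩ b ⊆ A := by
    have hvh : v ∉ h := fun hvh ↦ (Finset.mem_union.mp (hhS hvh)).elim hvS hvA
    have htrace_insert := (hsegment.2 h hh).resolve_right fun hsub ↦
      hvh (hsub (Finset.mem_insert_self v A))
    exact (Finset.subset_insert_iff_of_notMem fun hv ↦ hvh (Finset.mem_of_mem_inter_left hv)).mp
      htrace_insert
  have hmatching (hvS : v ∉ S) :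
      ContainsMatching H k (S ∪ A) ↔ ContainsMatching (contractBlock H b A) k S :=
    ⟨.to_contractBlock hAb hA (htrace hvS), .of_contractBlock hb hA⟩
  simp only [SetLike.mem_coe, mem_deletion, mem_closedStar, mem_matchingFree,
    Finset.disjoint_union_left, Finset.disjoint_insert_right, Finset.singleton_subset_iff]
  tauto

theorem IsBlockForest.exists_isInitialSegment_insert (hH : IsBlockForest H B) (hb : b ∈ B)
    (hA : ∀ h ∈ H, ¬ h ⊆ A) (hsegment : IsInitialSegment H b A) :
    ∃ v ∈ b, v ∉ A ∧ IsInitialSegment H b (insert v A) := by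
  have b_mem : b ∈ H.filter (¬ · ∩ b ⊆ A) := by
    rw [Finset.mem_filter, Finset.inter_self]
    exact ⟨hH.subset hb, hA b (hH.subset hb)⟩
  obtain ⟨h, hh, hmin⟩ := Finset.exists_min_image _ (fun h ↦ (h ∩ b).card) ⟨b, b_mem⟩
  obtain ⟨hhH, hhA⟩ := Finset.mem_filter.mp hh
  obtain ⟨v, hv, hvA⟩ := Finset.not_subset.mp hhA
  have hvb : v ∈ b := Finset.mem_of_mem_inter_right hv
  refine ⟨v, hvb, hvA, Finset.insert_subset hvb hsegment.1, fun g hg ↦ ?_⟩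
  refine or_iff_not_imp_left.mpr fun hgvA ↦ ?_
  have hgA : ¬ g ∩ b ⊆ A := fun hgA ↦ hgvA (hgA.trans (Finset.subset_insert v A))
  have trace_subset : h ∩ b ⊆ g ∩ b := by
    rw [Finset.inter_comm h, Finset.inter_comm g]
    obtain hsub | hsub := hH.chain b hb h hhH g hg
    · exact Finset.subset_inter Finset.inter_subset_left hsub
    · refine (Finset.eq_of_subset_of_card_le
        (Finset.subset_inter Finset.inter_subset_left hsub) ?_).symm.subset
      simpa only [Finset.inter_comm] using hmin g (Finset.mem_filter.mpr ⟨hg, hgA⟩)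
  exact Finset.insert_subset (Finset.mem_of_mem_inter_left (trace_subset hv))
    ((hsegment.2 g hg).resolve_left hgA)

theorem closedStar_empty (Δ : LowerSet (Finset α)) : closedStar Δ ∅ = Δ := by
  ext A
  rw [SetLike.mem_coe, SetLike.mem_coe, mem_closedStar, Finset.union_empty]

theorem closedStar_closedStar (Δ : LowerSet (Finset α)) (A C : Finset α) :
    closedStar (closedStar Δ A) C = closedStar Δ (C ∪ A) := by
  ext S
  rw [SetLike.mem_coe, SetLike.mem_coe, mem_closedStar, mem_closedStar, mem_closedStar,
    Finset.union_assoc]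

theorem IsBlockForest.isVertexDecomposable_closedStar (hH : IsBlockForest H B) (hb : b ∈ B)
    (hspecial : IsSpecialBlock H b) (hbZ : Disjoint b Z)
    (hstar : IsVertexDecomposable d (matchingFree Z (contractBlock H b ∅) k))
    (hdel : ∀ A, ∀ v ∈ b, (∀ h ∈ H, ¬ h ⊆ A) →
      IsVertexDecomposable d (matchingFree (insert v Z) (contractBlock H b A) (k + 1)))
    (hsegment : IsInitialSegment H b A) :
    IsVertexDecomposable d (closedStar (matchingFree Z H (k + 1)) A) := by
  induction hm : (b \ A).card generalizing A with
  | zero =>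
    rw [Finset.card_eq_zero, Finset.sdiff_eq_empty_iff_subset] at hm
    rwa [hH.closedStar_matchingFree hb hsegment.1 hbZ (hH.subset hb) hm]
  | succ m ih =>
  by_cases hA : ∃ h ∈ H, h ⊆ A
  · obtain ⟨h, hh, hhA⟩ := hA
    rwa [hH.closedStar_matchingFree hb hsegment.1 hbZ hh hhA]
  push Not at hA
  obtain ⟨v, hvb, hvA, hsegment'⟩ := hH.exists_isInitialSegment_insert hb hA hsegment
  refine .step _ v ?_ ?_
  · rw [closedStar_closedStar]
    refine ih hsegment' ?_
    rw [← Finset.insert_eq, Finset.sdiff_insert,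
      Finset.card_erase_of_mem (Finset.mem_sdiff.mpr ⟨hvb, hvA⟩), hm, Nat.add_sub_cancel]
  · rw [deletion_closedStar_matchingFree hspecial hbZ hsegment.1 hA hvA hsegment']
    exact hdel A v hvb hA

theorem matchingFree_zero (Z : Finset α) (H : Finset (Finset α)) : matchingFree Z H 0 = ⊥ := by
  ext A
  simp [mem_matchingFree, containsMatching_zero]

theorem IsBlockForest.matchingFree_of_card_lt [Fintype α] (hH : IsBlockForest H B)
    (hk : B.card < k) : matchingFree Z H k = LowerSet.Iic Zᶜ := by
  ext A
  rw [SetLike.mem_coe, SetLike.mem_coe, mem_matchingFree, LowerSet.mem_Iic_iff,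
    Finset.subset_compl_iff_disjoint_right, and_iff_left]
  exact fun hA ↦ (hH.le_card_of_containsMatching hA).not_gt hk

theorem IsBlockForest.isVertexDecomposable_matchingFree [Fintype α] (hH : IsBlockForest H B)
    (hBZ : ∀ b ∈ B, Disjoint b Z) (hk : k ≤ B.card + 1)
    (hd : d + Z.card + B.card + 1 = Fintype.card α + k) :
    IsVertexDecomposable d (matchingFree Z H k) := by
  induction B using Finset.strongInduction generalizing H Z k with
  | H B ih =>
  obtain hlt | hle := lt_or_ge B.card k
  · rw [hH.matchingFree_of_card_lt hlt]
    exact .simplex _ (by rw [Finset.card_compl]; omega)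
  cases k with
  | zero => exact matchingFree_zero Z H ▸ .void
  | succ k =>
  obtain ⟨b, hb, hspecial⟩ := hH.exists_isSpecialBlock (Finset.card_pos.mp (by omega))
  have card_erase : (B.erase b).card + 1 = B.card := Finset.card_erase_add_one hb
  have hstar : IsVertexDecomposable d (matchingFree Z (contractBlock H b ∅) k) := by
    refine ih _ (Finset.erase_ssubset hb) (hH.isBlockForest_contractBlock hb fun h hh hsub ↦ ?_)
      (fun c hc ↦ hBZ c (Finset.mem_of_mem_erase hc)) (by omega) (by omega)
    exact (hH.nonempty h hh).ne_empty (Finset.subset_empty.mp hsub)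
  have hdel (A : Finset α) (v : α) (hv : v ∈ b) (hA : ∀ h ∈ H, ¬ h ⊆ A) :
      IsVertexDecomposable d (matchingFree (insert v Z) (contractBlock H b A) (k + 1)) := by
    have card_insert : (insert v Z).card = Z.card + 1 :=
      Finset.card_insert_of_notMem (Finset.disjoint_left.mp (hBZ b hb) hv)
    refine ih _ (Finset.erase_ssubset hb) (hH.isBlockForest_contractBlock hb hA) (fun c hc ↦ ?_)
      (by omega) (by omega)
    obtain ⟨hcb, hc⟩ := Finset.mem_erase.mp hc
    exact Finset.disjoint_insert_right.mpr
      ⟨fun hvc ↦ hcb (hH.pairwiseDisjoint.elim_finset hc hb v hvc hv), hBZ c hc⟩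
  rw [← closedStar_empty (matchingFree Z H (k + 1))]
  exact hH.isVertexDecomposable_closedStar hb hspecial (hBZ b hb) hstar hdel
    ⟨Finset.empty_subset b, fun h _ ↦ Or.inr (Finset.empty_subset h)⟩

end BlockForests

section GraftedForests

variable {α : Type} [DecidableEq α] {S B : Finset (Finset α)} {b : Finset α}

theorem IsGrafted.isLeafOf_of_free_vertex (hS : IsGrafted S) (hb : b ∈ S) {v : α} (hv : v ∈ b)
    (hfree : ∀ h ∈ S, v ∈ h → h = b) : IsLeafOf S b := by
  obtain ⟨_, Fs, Gs, rfl, -, hcover, hleaves, -, -⟩ := hS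
  rw [hleaves]
  obtain hbF | hbG := Finset.mem_union.mp hb
  · exact hbF
  · obtain ⟨F, hF, hvF⟩ := hcover b hbG v hv
    exact hfree F (Finset.mem_union_left Gs hF) hvF ▸ hF

theorem IsLeafOf.exists_free_vertex (hS : IsAntichain (· ⊆ ·) (S : Set (Finset α)))
    (hne : b.Nonempty) (hb : IsLeafOf S b) : ∃ v ∈ b, ∀ h ∈ S, v ∈ h → h = b := by
  obtain ⟨hbS, honly | ⟨G, hG, hGb, hjoint⟩⟩ := hb
  · exact hne.imp fun v hv ↦ ⟨hv, fun h hh _ ↦ honly h hh⟩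
  · obtain ⟨v, hvb, hvG⟩ := Finset.not_subset.mp (hS hbS hG hGb.symm)
    refine ⟨v, hvb, fun h hh hvh ↦ by_contra fun hhb ↦ hvG ?_⟩
    exact Finset.mem_of_mem_inter_right (hjoint h hh hhb (Finset.mem_inter.mpr ⟨hvb, hvh⟩))

/- If some nonleaf other than `G` and `G'` exists, delete it: the leaf `b` keeps its free vertex.
Otherwise the joint of `b` is a leaf, and then disjoint from `b`, or it is `G` or `G'`. -/
theorem IsGrafted.chain_of_isLeafOf (hS : IsGrafted S)
    (hanti : IsAntichain (· ⊆ ·) (S : Set (Finset α))) (hne : ∀ h ∈ S, h.Nonempty)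
    (hb : IsLeafOf S b) {G G' : Finset α} (hG : G ∈ S) (hG' : G' ∈ S) :
    b ∩ G ⊆ G' ∨ b ∩ G' ⊆ G := by
  induction hS with
  | intro S Fs Gs hunion hdisj _ hleaves hFdisj hrec ih =>
  obtain rfl | hGb := eq_or_ne G b
  · exact .inr Finset.inter_subset_left
  obtain rfl | hGb' := eq_or_ne G' b
  · exact .inl Finset.inter_subset_left
  have inter_leaf {F : Finset α} (hF : F ∈ Fs) (hFb : F ≠ b) : b ∩ F = ∅ :=
    hFdisj b ((hleaves b).mp hb) F hF hFb.symm
  by_cases hex : ∃ E ∈ Gs, E ≠ G ∧ E ≠ G'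
  · obtain ⟨E, hE, hEG, hEG'⟩ := hex
    have hbE : b ≠ E := fun h ↦ Finset.disjoint_left.mp hdisj ((hleaves b).mp hb) (h ▸ hE)
    obtain ⟨v, hv, hfree⟩ := hb.exists_free_vertex hanti (hne b hb.1)
    refine ih E hE (hanti.subset (Finset.coe_subset.mpr (Finset.erase_subset E S)))
      (fun h hh ↦ hne h (Finset.mem_of_mem_erase hh)) ?_ (Finset.mem_erase.mpr ⟨hEG.symm, hG⟩)
      (Finset.mem_erase.mpr ⟨hEG'.symm, hG'⟩)
    exact (hrec E hE).isLeafOf_of_free_vertex (Finset.mem_erase.mpr ⟨hbE, hb.1⟩) hv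
      fun h hh ↦ hfree h (Finset.mem_of_mem_erase hh)
  push Not at hex
  obtain ⟨-, honly | ⟨J, hJ, hJb, hjoint⟩⟩ := hb
  · exact absurd (honly G hG) hGb
  obtain hJF | hJG := Finset.mem_union.mp (hunion ▸ hJ)
  · refine .inl ((hjoint G hG hGb).trans ?_)
    rw [inter_leaf hJF hJb]
    exact Finset.empty_subset G'
  obtain rfl | hJG' := eq_or_ne J G
  · exact .inr ((hjoint G' hG' hGb').trans Finset.inter_subset_right)
  · exact .inl ((hjoint G hG hGb).trans (hex J hJG hJG' ▸ Finset.inter_subset_right))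

theorem IsGrafted.exists_isBlockForest (hS : IsGrafted S) (hleaf : HasLeafProp S)
    (hanti : IsAntichain (· ⊆ ·) (S : Set (Finset α))) (hne : ∀ h ∈ S, h.Nonempty) :
    ∃ B, IsBlockForest S B := by
  have hchain {b : Finset α} (hb : IsLeafOf S b) (h : Finset α) (hh : h ∈ S) (h' : Finset α)
      (hh' : h' ∈ S) : b ∩ h ⊆ h' ∨ b ∩ h' ⊆ h := hS.chain_of_isLeafOf hanti hne hb hh hh'
  obtain ⟨_, Fs, Gs, rfl, -, hcover, hleaves, hFdisj, -⟩ := hS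
  refine ⟨Fs, hleaf, Finset.subset_union_left, fun F hF F' hF' hFF' ↦ ?_, hne, fun h hh v hv ↦ ?_,
    fun b hb ↦ hchain ((hleaves b).mpr hb)⟩
  · exact Finset.disjoint_iff_inter_eq_empty.mpr (hFdisj F hF F' hF' hFF')
  · obtain hhF | hhG := Finset.mem_union.mp hh
    · exact ⟨h, hhF, hv⟩
    · exact hcover h hhG v hv

end GraftedForests

section SquarefreePowers

variable {σ : Type} {H B : Finset (Finset σ)} {k : ℕ}

theorem pairwiseDisjoint_of_sum_sqfreeExponent_le {ι : Type*} {s : Finset ι} {F : ι → Finset σ}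
    {A : Finset σ} (hle : ∑ i ∈ s, sqfreeExponent (F i) ≤ sqfreeExponent A) :
    (s : Set ι).PairwiseDisjoint F := by
  classical
  refine fun i hi j hj hij ↦ Finset.disjoint_left.mpr fun v hvi hvj ↦ ?_
  have hpair : sqfreeExponent (F i) + sqfreeExponent (F j) ≤ sqfreeExponent A :=
    calc sqfreeExponent (F i) + sqfreeExponent (F j) = ∑ l ∈ {i, j}, sqfreeExponent (F l) :=
          (Finset.sum_pair (f := fun l ↦ sqfreeExponent (F l)) hij).symm
      _ ≤ ∑ l ∈ s, sqfreeExponent (F l) :=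
          Finset.sum_le_sum_of_subset (Finset.insert_subset hi (Finset.singleton_subset_iff.mpr hj))
      _ ≤ sqfreeExponent A := hle
  have hv := hpair v
  rw [Finsupp.add_apply, sqfreeExponent_apply, sqfreeExponent_apply, sqfreeExponent_apply,
    if_pos hvi, if_pos hvj] at hv
  split_ifs at hv <;> omega

theorem facetIdealOf_pow (H : Finset (Finset σ)) (k : ℕ) :
    facetIdealOf K H ^ k = Ideal.span ((fun m ↦ monomial m (1 : K)) ''
      {m | ∃ F : Fin k → Finset σ, (∀ i, F i ∈ H) ∧ ∑ i, sqfreeExponent (F i) = m}) := by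
  rw [facetIdealOf, Ideal.span, Submodule.span_pow]
  congr 1
  ext p
  simp only [Set.mem_pow, List.prod_ofFn, Set.mem_image, Set.mem_ofPred_eq]
  constructor
  · rintro ⟨f, rfl⟩
    choose F hF hFf using fun i ↦ (f i).2
    exact ⟨_, ⟨F, hF, rfl⟩, by simp only [hFf, xMon_eq_monomial, monomial_sum_one]⟩
  · rintro ⟨_, ⟨F, hF, rfl⟩, rfl⟩
    exact ⟨fun i ↦ ⟨xMon K (F i), F i, hF i, rfl⟩, by
      simp only [xMon_eq_monomial, monomial_sum_one]⟩

variable [DecidableEq σ]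

theorem ContainsMatching.xMon_mem_facetIdealOf_pow {A : Finset σ} (hA : ContainsMatching H k A) :
    xMon K A ∈ facetIdealOf K H ^ k := by
  obtain ⟨M, hM, rfl, hMA⟩ := hA
  obtain ⟨hMH, hMdisj⟩ := isMatchingOf_iff_pairwiseDisjoint.mp hM
  have prod_eq : ∏ F ∈ M, xMon K F = xMon K (M.biUnion fun F ↦ F) :=
    (Finset.prod_biUnion hMdisj).symm
  refine Ideal.mem_of_dvd _ (xMon_dvd_xMon K (Finset.biUnion_subset.mpr hMA)) ?_
  rw [← prod_eq, ← Finset.prod_const]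
  exact Ideal.prod_mem_prod fun F hF ↦ Ideal.subset_span ⟨F, hMH hF, rfl⟩

theorem xMon_mem_facetIdealOf_pow (hH : ∀ F ∈ H, F.Nonempty) {A : Finset σ} :
    xMon K A ∈ facetIdealOf K H ^ k ↔ ContainsMatching H k A := by
  refine ⟨fun hA ↦ ?_, ContainsMatching.xMon_mem_facetIdealOf_pow K⟩
  rw [facetIdealOf_pow, mem_ideal_span_monomial_image] at hA
  obtain ⟨_, ⟨F, hF, rfl⟩, hle⟩ := hA (sqfreeExponent A) (by simp [xMon_eq_monomial])
  have hdisj := pairwiseDisjoint_of_sum_sqfreeExponent_le hle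
  have hinj : Function.Injective F := by
    intro i j hij
    refine hdisj.elim (Finset.mem_coe.mpr (Finset.mem_univ i))
      (Finset.mem_coe.mpr (Finset.mem_univ j)) fun hd ↦ (hH _ (hF j)).ne_empty ?_
    exact disjoint_self.mp (hij ▸ hd)
  refine ⟨Finset.univ.image F, isMatchingOf_iff_pairwiseDisjoint.mpr ⟨?_, ?_⟩, ?_, ?_⟩
  · exact Finset.image_subset_iff.mpr fun i _ ↦ hF i
  · rw [Finset.coe_image, hinj.injOn.pairwiseDisjoint_image]
    exact hdisj
  · rw [Finset.card_image_of_injective _ hinj, Finset.card_fin]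
  · refine Finset.forall_mem_image.mpr fun i _ ↦ ?_
    rw [← support_sqfreeExponent A, ← sqfreeExponent_le_iff]
    exact (Finset.single_le_sum_of_canonicallyOrdered (Finset.mem_univ i)).trans hle

theorem sqfreePow_facetIdealOf (hH : ∀ F ∈ H, F.Nonempty) :
    sqfreePow K (facetIdealOf K H) k = stanleyReisnerIdeal K (matchingFree ∅ H k) := by
  rw [sqfreePow, stanleyReisnerIdeal]
  congr 1
  ext p
  simp only [Set.mem_ofPred_eq, Set.mem_image, Set.mem_compl_iff, SetLike.mem_coe, mem_matchingFree,
    Finset.disjoint_empty_right, true_and, not_not]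
  constructor
  · rintro ⟨⟨A, rfl⟩, hA⟩
    exact ⟨A, (xMon_mem_facetIdealOf_pow K hH).mp hA, rfl⟩
  · rintro ⟨A, hA, rfl⟩
    exact ⟨⟨A, rfl⟩, (xMon_mem_facetIdealOf_pow K hH).mpr hA⟩

theorem IsBlockForest.card_le [Fintype σ] (hH : IsBlockForest H B) : B.card ≤ Fintype.card σ :=
  calc B.card ≤ (B.biUnion id).card :=
        Finset.card_le_card_biUnion hH.pairwiseDisjoint fun b hb ↦ hH.nonempty b (hH.subset hb)
    _ ≤ Fintype.card σ := Finset.card_le_univ _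

theorem IsBlockForest.isCMQuot_sqfreePow [Finite σ] (hH : IsBlockForest H B) (hk : 1 ≤ k) :
    IsCMQuot K (sqfreePow K (facetIdealOf K H) k) := by
  have := Fintype.ofFinite σ
  have hface : ∅ ∈ matchingFree ∅ H k := by
    refine mem_matchingFree.mpr ⟨disjoint_bot_right, ?_⟩
    rintro ⟨M, hM, rfl, hMempty⟩
    obtain ⟨F, hF⟩ := Finset.card_pos.mp hk
    exact (hH.nonempty F (hM.1 hF)).ne_empty (Finset.subset_empty.mp (hMempty F hF))
  rw [sqfreePow_facetIdealOf K hH.nonempty]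
  obtain hlt | hle := lt_or_ge B.card k
  · have hsimplex : IsVertexDecomposable (Fintype.card σ) (matchingFree ∅ H k) := by
      rw [hH.matchingFree_of_card_lt hlt, Finset.compl_empty]
      exact .simplex _ Finset.card_univ
    exact hsimplex.isCMQuot K hface
  · have hcard := hH.card_le
    exact (hH.isVertexDecomposable_matchingFree (d := Fintype.card σ + k - B.card - 1)
      (by simp) (by omega) (by rw [Finset.card_empty]; omega)).isCMQuot K hface

end SquarefreePowers

section Statements

variable {V : Type} [Fintype V] [DecidableEq V] (K : Type) [Field K]

theorem stmt0 (Δ : SimplicialComplexOn V)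
    (hcov : ∀ v : V, ∃ F ∈ Δ.facets, v ∈ F)
    (hCM : IsCMForestFacets Δ.facets) :
    ∀ k : ℕ, 1 ≤ k → IsCMQuot K (sqfreePow K (facetIdealOf K Δ.facets) k) := by
  intro k hk
  have hanti : IsAntichain (· ⊆ ·) (Δ.facets : Set (Finset V)) :=
    fun F hF G hG hFG hsub ↦ hFG (Δ.antichain F hF G hG hsub)
  obtain ⟨B, hB⟩ := hCM.2.exists_isBlockForest hCM.1 hanti Δ.nonempty_facet
  exact hB.isCMQuot_sqfreePow K hk

end Statements
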